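/- Let A be a subhomogeneous C*-algebra and B any C*-algebra. Then the Banach space projective tensor product A ⊗_γ B, with its canonical Banach *-algebra structure, is symmetric. -/

import Mathlib

open scoped TensorProduct
open Pointwise

universe u

noncomputable section

/-- A C⋆-norm on a complex `*`-algebra.  On a matrix algebra over a C⋆-algebra such a
norm is unique, namely the canonical C⋆-norm. -/
structure IsCStarNorm {M : Type*} [NonUnitalRing M] [StarRing M] [Module ℂ M]
    (N : M → ℝ) : Prop where
  add_le : ∀ x y, N (x + y) ≤ N x + N y
  smul_eq : ∀ (c : ℂ) (x : M), N (c • x) = ‖c‖ * N x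
  eq_zero_of : ∀ x, N x = 0 → x = 0
  mul_le : ∀ x y, N (x * y) ≤ N x * N y
  star_mul_self : ∀ x, N (star x * x) = N x * N x

/-- The operator space projective tensor norm `‖·‖_∧` on the algebraic tensor product
`A ⊗ B`, relative to given families of matrix norms on `A` and `B`:
`‖u‖_∧ = inf { ‖α‖ ‖v‖ ‖w‖ ‖β‖ : u = α (v ⊗ w) β }` where `v ∈ M_p(A)`, `w ∈ M_q(B)`,
`α ∈ M_{1,pq}(ℂ)` and `β ∈ M_{pq,1}(ℂ)` (row and column vectors carrying the Euclidean
norm, which is their norm as scalar matrices). -/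
noncomputable def osProjNorm {A B : Type u}
    [AddCommGroup A] [Module ℂ A] [AddCommGroup B] [Module ℂ B]
    (NA : ∀ p : ℕ, Matrix (Fin p) (Fin p) A → ℝ)
    (NB : ∀ q : ℕ, Matrix (Fin q) (Fin q) B → ℝ) (u : A ⊗[ℂ] B) : ℝ :=
  sInf { r : ℝ | ∃ (p q : ℕ) (α : Fin p × Fin q → ℂ) (v : Matrix (Fin p) (Fin p) A)
      (w : Matrix (Fin q) (Fin q) B) (β : Fin p × Fin q → ℂ),
      u = ∑ ik : Fin p × Fin q, ∑ jl : Fin p × Fin q,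
            (α ik * β jl) • (v ik.1 jl.1 ⊗ₜ[ℂ] w ik.2 jl.2) ∧
      r = Real.sqrt (∑ ik, ‖α ik‖ ^ 2) * NA p v * NB q w *
            Real.sqrt (∑ jl, ‖β jl‖ ^ 2) }

/-- `X` is a completion of the algebraic tensor product `A ⊗ B` with respect to the
norm `ν`, via the (necessarily isometric) dense embedding `ι`, and the multiplication and
involution of `X` are the canonical ones induced from `A` and `B`.  Applied with
`ν = osProjNorm NA NB` (for the canonical matrix C⋆-norms `NA`, `NB`) this characterizes
the Banach `*`-algebra `A ⊗̂ B` (the operator space projective tensor product) up to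
isometric `*`-isomorphism; applied with `ν = bsProjNorm` it characterizes the Banach
space projective tensor product `A ⊗_γ B`. -/
structure IsTensorCompletion {A B : Type u} [NonUnitalRing A] [StarRing A] [Module ℂ A]
    [NonUnitalRing B] [StarRing B] [Module ℂ B] (ν : A ⊗[ℂ] B → ℝ)
    (X : Type u) [NonUnitalNormedRing X] [StarRing X] [NormedSpace ℂ X] [CompleteSpace X]
    (ι : A ⊗[ℂ] B →ₗ[ℂ] X) : Prop where
  norm_eq : ∀ u, ‖ι u‖ = ν u
  dense : DenseRange ι
  mul_tmul : ∀ (a c : A) (b d : B),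
    ι (a ⊗ₜ[ℂ] b) * ι (c ⊗ₜ[ℂ] d) = ι ((a * c) ⊗ₜ[ℂ] (b * d))
  star_tmul : ∀ (a : A) (b : B), star (ι (a ⊗ₜ[ℂ] b)) = ι (star a ⊗ₜ[ℂ] star b)

/-- The product ideal `S ⊗̂ T`: the closure in `X` (a completion of `A ⊗ B`) of the span of
elementary tensors `a ⊗ b` with `a ∈ S`, `b ∈ T`. -/
def tensorIdeal {A B : Type u} [NonUnitalRing A] [StarRing A] [Module ℂ A]
    [NonUnitalRing B] [StarRing B] [Module ℂ B]
    {X : Type u} [NonUnitalNormedRing X] [StarRing X] [NormedSpace ℂ X] [CompleteSpace X]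
    (ι : A ⊗[ℂ] B →ₗ[ℂ] X) (S : Set A) (T : Set B) : Set X :=
  closure (ι '' (Submodule.span ℂ (Set.image2 (fun a b => a ⊗ₜ[ℂ] b) S T)))

/-- A closed prime (two-sided) ideal of a Banach algebra: a proper closed two-sided ideal `K`
such that whenever the product of two closed two-sided ideals is contained in `K`, one of them
is contained in `K`. -/
def IsClosedPrimeIdeal {Y : Type u} [NonUnitalNormedRing Y] (K : TwoSidedIdeal Y) : Prop :=
  IsClosed (K : Set Y) ∧ (K : Set Y) ≠ Set.univ ∧
    ∀ I J : TwoSidedIdeal Y, IsClosed (I : Set Y) → IsClosed (J : Set Y) →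
      (∀ x ∈ I, ∀ y ∈ J, x * y ∈ K) → (I : Set Y) ⊆ (K : Set Y) ∨ (J : Set Y) ⊆ (K : Set Y)

/-- An irreducible continuous `*`-representation of a Banach `*`-algebra `Y` on a complex
Hilbert space. -/
structure IrreducibleRepOn (Y : Type u)
    [NonUnitalNormedRing Y] [StarRing Y] [NormedSpace ℂ Y] where
  H : Type u
  [normH : NormedAddCommGroup H]
  [ipsH : InnerProductSpace ℂ H]
  [csH : CompleteSpace H]
  π : Y →⋆ₙₐ[ℂ] (H →L[ℂ] H)
  continuous : Continuous π
  nonzero : ∃ y, π y ≠ 0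
  irreducible : ∀ S : Submodule ℂ H, IsClosed (S : Set H) →
    (∀ y : Y, ∀ v ∈ S, π y v ∈ S) → S = ⊥ ∨ S = ⊤

/-- A primitive ideal: the kernel of an irreducible `*`-representation. -/
def IsPrimitiveIdeal {Y : Type u} [NonUnitalNormedRing Y] [StarRing Y] [NormedSpace ℂ Y]
    (K : TwoSidedIdeal Y) : Prop :=
  ∃ ρ : IrreducibleRepOn Y, ∀ y, y ∈ K ↔ ρ.π y = 0

/-- A subset `K` of a ring is modular (as an ideal) if there is a relative unit `e`
with `x * e - x ∈ K` and `e * x - x ∈ K` for every `x`. -/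
def IsModularIdealSet {Y : Type u} [NonUnitalRing Y] (K : Set Y) : Prop :=
  ∃ e : Y, ∀ x : Y, x * e - x ∈ K ∧ e * x - x ∈ K

/-- A maximal modular (two-sided) ideal: a modular ideal which is proper and maximal among
proper two-sided ideals. -/
def IsMaximalModularIdeal {Y : Type u} [NonUnitalRing Y] (K : TwoSidedIdeal Y) : Prop :=
  IsModularIdealSet (K : Set Y) ∧ (K : Set Y) ≠ Set.univ ∧
    ∀ L : TwoSidedIdeal Y, (K : Set Y) ⊆ (L : Set Y) →
      (L : Set Y) = (K : Set Y) ∨ (L : Set Y) = Set.univ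

/-- The operator norm of a `p × p` matrix of bounded operators on a Hilbert space `H`,
viewed as an operator on the `ℓ²`-direct sum `H ⊕ ⋯ ⊕ H`. -/
noncomputable def opMatrixNorm {H : Type u} [NormedAddCommGroup H] [InnerProductSpace ℂ H]
    {p : ℕ} (T : Matrix (Fin p) (Fin p) (H →L[ℂ] H)) : ℝ :=
  sSup { r : ℝ | ∃ x : Fin p → H, (∑ i, ‖x i‖ ^ 2) ≤ 1 ∧
      r = Real.sqrt (∑ i, ‖∑ j, (T i j) (x j)‖ ^ 2) }

/-- An operator algebra structure on a Banach algebra `Y`: a bicontinuous algebra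
homomorphism of `Y` into the bounded operators on some Hilbert space. -/
structure OperatorAlgebraEmbedding (Y : Type u) [NonUnitalNormedRing Y] [NormedSpace ℂ Y] where
  H : Type u
  [normH : NormedAddCommGroup H]
  [ipsH : InnerProductSpace ℂ H]
  [csH : CompleteSpace H]
  ρ : Y →ₙₐ[ℂ] (H →L[ℂ] H)
  c : ℝ
  C : ℝ
  c_pos : 0 < c
  lower : ∀ y, c * ‖y‖ ≤ ‖ρ y‖
  upper : ∀ y, ‖ρ y‖ ≤ C * ‖y‖

/-- The matrix norms on `Y` induced by an operator algebra embedding, giving `Y` its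
operator space structure: the norm of `v ∈ M_p(Y)` is the operator norm of the matrix
of operators obtained by applying the embedding entrywise. -/
noncomputable def OperatorAlgebraEmbedding.matrixNorm {Y : Type u}
    [NonUnitalNormedRing Y] [NormedSpace ℂ Y] (e : OperatorAlgebraEmbedding Y)
    (p : ℕ) (v : Matrix (Fin p) (Fin p) Y) : ℝ :=
  letI := e.normH; letI := e.ipsH
  opMatrixNorm (v.map e.ρ)

/-- The Banach space projective tensor norm `‖·‖_γ` on the algebraic tensor product. -/
noncomputable def bsProjNorm {A B : Type u} [NonUnitalNormedRing A] [NormedSpace ℂ A]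
    [NonUnitalNormedRing B] [NormedSpace ℂ B] (u : A ⊗[ℂ] B) : ℝ :=
  sInf { r : ℝ | ∃ (n : ℕ) (a : Fin n → A) (b : Fin n → B),
      u = ∑ i, a i ⊗ₜ[ℂ] b i ∧ r = ∑ i, ‖a i‖ * ‖b i‖ }

/-- A C⋆-algebra `A` is subhomogeneous if there is `n : ℕ` bounding the (finite)
dimensions of all its irreducible `*`-representations. -/
def IsSubhomogeneous (A : Type u) [NonUnitalCStarAlgebra A] : Prop :=
  ∃ n : ℕ, ∀ ρ : IrreducibleRepOn A,
    letI := ρ.normH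
    letI := ρ.ipsH
    FiniteDimensional ℂ ρ.H ∧ Module.finrank ℂ ρ.H ≤ n

/-!
In a Banach `*`-algebra an element is quasiregular as soon as it and its adjoint are left
quasiregular, so it suffices that `g = -c⁻¹ x⋆x` is left quasiregular in `X` whenever its images in
the C⋆-algebras `M_k(B)` are. If it is not, some closed prime ideal `K` of `X` contains no
`g + w + w g`. The elements `a ∈ A` with `a ⊗ B ⊆ K` form a closed prime ideal of `A`, and since `A`
is subhomogeneous this ideal is the kernel of an irreducible representation on some `ℂ^k`. By
Burnside's theorem the representation maps onto `M_k(ℂ)`, so the kernel of the induced map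
`X → M_k(B)` lies in `K`; lifting a left quasi-inverse of the image of `g` gives a contradiction.
-/

open scoped CStarAlgebra ComplexOrder InnerProductSpace

section Ideals

variable {R A : Type*} [Semiring R] [NonUnitalRing A] [Module R A]

/-- Two-sided ideals of a not necessarily unital algebra, encoded as those linear subspaces that
absorb multiplication on both sides. -/
structure IsTwoSidedIdeal (I : Submodule R A) : Prop where
  mul_mem_left : ∀ a : A, ∀ x ∈ I, a * x ∈ I
  mul_mem_right : ∀ x ∈ I, ∀ a : A, x * a ∈ I

/-- Prime ideals of a noncommutative algebra `A`: proper two-sided ideals `I` for which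
`x A y ⊆ I` implies `x ∈ I` or `y ∈ I`. -/
structure IsPrimeIdeal (I : Submodule R A) : Prop extends IsTwoSidedIdeal I where
  exists_notMem : ∃ x, x ∉ I
  mem_or_mem : ∀ x y : A, (∀ a, x * a * y ∈ I) → x ∈ I ∨ y ∈ I

variable {I : Submodule R A}

lemma IsPrimeIdeal.mem_of_forall_mul_mem (hI : IsPrimeIdeal I) {x : A} (hx : ∀ a, a * x ∈ I) :
    x ∈ I := by
  obtain ⟨e, he⟩ := hI.exists_notMem
  exact (hI.mem_or_mem e x fun a ↦ hx (e * a)).resolve_left he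

lemma IsPrimeIdeal.mem_of_forall_mem_mul (hI : IsPrimeIdeal I) {x : A} (hx : ∀ a, x * a ∈ I) :
    x ∈ I := by
  obtain ⟨e, he⟩ := hI.exists_notMem
  exact (hI.mem_or_mem x e fun a ↦ hI.mul_mem_right _ (hx a) e).resolve_right he

lemma IsTwoSidedIdeal.mem_of_forall_exists_norm_mul_le {R A : Type*} [Semiring R]
    [NormedRing A] [Module R A] {I : Submodule R A} (hI : IsTwoSidedIdeal I)
    (hcl : IsClosed (I : Set A)) {x : A}
    (hx : ∀ ε > 0, ∃ v : A, 1 - v ∈ I ∧ ‖x * v‖ ≤ ε) : x ∈ I := by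
  rw [← SetLike.mem_coe, ← hcl.closure_eq, Metric.mem_closure_iff]
  intro ε hε
  obtain ⟨v, hvI, hv⟩ := hx (ε / 2) (half_pos hε)
  refine ⟨x * (1 - v), hI.mul_mem_left x _ hvI, ?_⟩
  rw [dist_eq_norm, mul_one_sub, sub_sub_cancel]
  exact hv.trans_lt (half_lt_self hε)

end Ideals

section ClosedIdealsOfUnitalCStarAlgebras

variable {A : Type*} [CStarAlgebra A] [PartialOrder A] [StarOrderedRing A]

lemma exists_isSelfAdjoint_one_sub_eq_mul {s : A} (hs : 0 ≤ s) {δ : ℝ} (hδ : 0 < δ) :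
    ∃ v w : A, IsSelfAdjoint v ∧ ‖v‖ ≤ 1 ∧ 1 - v = w * s ∧ ‖v * s * v‖ ≤ δ := by
  have nonneg : ∀ t ∈ spectrum ℝ s, 0 ≤ t := fun t ht ↦ spectrum_nonneg_of_nonneg hs ht
  have pos : ∀ t ∈ spectrum ℝ s, 0 < δ + t := fun t ht ↦ add_pos_of_pos_of_nonneg hδ (nonneg t ht)
  have cont (c : ℝ) : ContinuousOn (fun t ↦ c / (δ + t)) (spectrum ℝ s) :=
    ContinuousOn.div (by fun_prop) (by fun_prop) fun t ht ↦ (pos t ht).ne'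
  refine ⟨cfc (fun t ↦ δ / (δ + t)) s, cfc (fun t ↦ 1 / (δ + t)) s, cfc_predicate _ _, ?_, ?_, ?_⟩
  · refine norm_cfc_le zero_le_one fun t ht ↦ ?_
    rw [Real.norm_of_nonneg (div_nonneg hδ.le (pos t ht).le), div_le_one (pos t ht)]
    exact le_add_of_nonneg_right (nonneg t ht)
  · nth_rewrite 3 [← cfc_id' ℝ s]
    rw [← cfc_mul _ _ s (cont 1), ← cfc_one ℝ s, ← cfc_sub _ _ s (by fun_prop) (cont δ)]
    refine cfc_congr fun t ht ↦ ?_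
    have := (pos t ht).ne'
    simp only [Pi.one_apply]
    field_simp
    ring
  · nth_rewrite 2 [← cfc_id' ℝ s]
    rw [← cfc_mul _ _ s (cont δ),
      ← cfc_mul (fun t ↦ δ / (δ + t) * t) _ s ((cont δ).mul continuousOn_id) (cont δ)]
    refine norm_cfc_le hδ.le fun t ht ↦ ?_
    have := pos t ht
    have := nonneg t ht
    rw [Real.norm_of_nonneg (by positivity), div_mul_eq_mul_div, div_mul_div_comm,
      div_le_iff₀ (by positivity)]
    nlinarith [mul_nonneg hδ.le (mul_nonneg this this), mul_nonneg (sq_nonneg δ) this,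
      pow_pos hδ 3]

variable {I : Submodule ℂ A}

lemma IsTwoSidedIdeal.exists_norm_mul_le (hI : IsTwoSidedIdeal I) {x : A} (hx : star x * x ∈ I)
    {ε : ℝ} (hε : 0 < ε) :
    ∃ v : A, IsSelfAdjoint v ∧ ‖v‖ ≤ 1 ∧ 1 - v ∈ I ∧ ‖x * v‖ ≤ ε := by
  obtain ⟨v, w, hv, hv1, hw, hxv⟩ :=
    exists_isSelfAdjoint_one_sub_eq_mul (star_mul_self_nonneg x) (pow_pos hε 2)
  refine ⟨v, hv, hv1, hw ▸ hI.mul_mem_left w _ hx, abs_le_of_sq_le_sq' ?_ hε.le |>.2⟩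
  rwa [sq, ← CStarRing.norm_star_mul_self, star_mul, hv.star_eq,
    show v * star x * (x * v) = v * (star x * x) * v by simp only [mul_assoc]]

lemma IsTwoSidedIdeal.mem_of_star_mul_self_mem (hI : IsTwoSidedIdeal I)
    (hcl : IsClosed (I : Set A)) {x : A} (hx : star x * x ∈ I) : x ∈ I :=
  hI.mem_of_forall_exists_norm_mul_le hcl fun _ hε ↦
    let ⟨v, _, _, hvI, hv⟩ := hI.exists_norm_mul_le hx hε
    ⟨v, hvI, hv⟩

lemma IsTwoSidedIdeal.star_mem (hI : IsTwoSidedIdeal I) (hcl : IsClosed (I : Set A)) {x : A}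
    (hx : x ∈ I) : star x ∈ I :=
  hI.mem_of_star_mul_self_mem hcl <| by
    rw [star_star]
    exact hI.mul_mem_right x hx _

lemma norm_mul_sq_le_of_nonneg {a c p v : A} (ha : 0 ≤ a) (hv : IsSelfAdjoint v) (hv1 : ‖v‖ ≤ 1) :
    ‖c * v‖ ^ 2 ≤ ‖star c * c + (a + p)‖ + ‖p * v‖ := by
  have hle : star (c * v) * (c * v) ≤ v * (star c * c + a) * v := by
    rw [← sub_nonneg]
    convert star_left_conjugate_nonneg ha v using 1
    rw [star_mul, hv.star_eq]
    noncomm_ring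
  calc ‖c * v‖ ^ 2 = ‖star (c * v) * (c * v)‖ := by rw [sq, CStarRing.norm_star_mul_self]
    _ ≤ ‖v * (star c * c + a) * v‖ :=
        CStarAlgebra.norm_le_norm_of_nonneg_of_le (star_mul_self_nonneg _) hle
    _ = ‖v * (star c * c + (a + p)) * v - v * (p * v)‖ := by congr 1; noncomm_ring
    _ ≤ ‖v‖ * ‖star c * c + (a + p)‖ * ‖v‖ + ‖v‖ * ‖p * v‖ :=
        (norm_sub_le _ _).trans <| add_le_add norm_mul₃_le (norm_mul_le _ _)
    _ ≤ 1 * ‖star c * c + (a + p)‖ * 1 + 1 * ‖p * v‖ := by gcongr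
    _ = _ := by ring

variable (I) in
/-- The closure of `A₊ + I`; its dual cone consists of the positive functionals that vanish on the
ideal `I`. -/
def nonnegAddCone : ProperCone ℝ A :=
  ⟨(PointedCone.positive ℝ A ⊔ (I.restrictScalars ℝ).restrictScalars _).closure,
    isClosed_closure⟩

lemma IsTwoSidedIdeal.neg_star_mul_self_notMem_nonnegAddCone (hI : IsTwoSidedIdeal I)
    (hcl : IsClosed (I : Set A)) {c : A} (hc : c ∉ I) : -(star c * c) ∉ nonnegAddCone I := by
  refine fun hmem ↦ hc <| hI.mem_of_forall_exists_norm_mul_le hcl fun ε hε ↦ ?_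
  have hε2 : 0 < ε ^ 2 / 2 := by positivity
  obtain ⟨x, hx, hdist⟩ := Metric.mem_closure_iff.1 hmem _ hε2
  obtain ⟨a, ha, p, hp, rfl⟩ := Submodule.mem_sup.1 hx
  obtain ⟨v, hv, hv1, hvI, hpv⟩ := hI.exists_norm_mul_le (hI.mul_mem_left (star p) p hp) hε2
  refine ⟨v, hvI, abs_le_of_sq_le_sq' ?_ hε.le |>.2⟩
  have hnorm : ‖star c * c + (a + p)‖ ≤ ε ^ 2 / 2 := by
    rw [dist_eq_norm, ← norm_neg] at hdist
    exact (congrArg norm (by abel)).trans_le hdist.le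
  linarith [norm_mul_sq_le_of_nonneg (c := c) (p := p) ha hv hv1]

end ClosedIdealsOfUnitalCStarAlgebras

section VectorFunctionals

variable {A H : Type*} [CStarAlgebra A] [NormedAddCommGroup H] [InnerProductSpace ℂ H]
  [CompleteSpace H] (π : A →⋆ₐ[ℂ] (H →L[ℂ] H))

lemma inner_apply_eq_inner_star_apply (a : A) (x y : H) : ⟪π a x, y⟫_ℂ = ⟪x, π (star a) y⟫_ℂ := by
  rw [map_star, ContinuousLinearMap.star_eq_adjoint, ContinuousLinearMap.adjoint_inner_right]

lemma apply_mem_orthogonal {S : Submodule ℂ H} (hS : ∀ a, ∀ x ∈ S, π a x ∈ S) (a : A) {y : H}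
    (hy : y ∈ Sᗮ) : π a y ∈ Sᗮ := by
  refine (Submodule.mem_orthogonal S _).2 fun x hx ↦ ?_
  rw [← star_star a, ← inner_apply_eq_inner_star_apply]
  exact (Submodule.mem_orthogonal S y).1 hy _ (hS _ x hx)

variable {π} in
lemma eq_top_of_dense_orbit {S : Submodule ℂ H} (hcl : IsClosed (S : Set H))
    (hS : ∀ a, ∀ x ∈ S, π a x ∈ S) {ξ : H} (hξ : DenseRange fun a ↦ π a ξ) (hmem : ξ ∈ S) :
    S = ⊤ :=
  eq_top_iff.2 fun x _ ↦
    closure_minimal (Set.range_subset_iff.2 fun a ↦ hS a ξ hmem) hcl (hξ x)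

variable [PartialOrder A] [StarOrderedRing A]

/-- The positive functional `a ↦ ⟪x, π a x⟫` attached to a vector `x` of a representation `π`. -/
def vectorFunctional (x : H) : A →ₚ[ℂ] ℂ :=
  .mk₀ { toFun := fun a ↦ ⟪x, π a x⟫_ℂ
         map_add' := fun a b ↦ by rw [map_add, add_apply, inner_add_right]
         map_smul' := fun z a ↦ by rw [map_smul, smul_apply, inner_smul_right]; rfl } <| by
    intro a ha
    obtain ⟨b, rfl⟩ := CStarAlgebra.nonneg_iff_eq_star_mul_self.1 ha
    change 0 ≤ ⟪x, π (star b * b) x⟫_ℂ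
    rw [map_mul, mul_apply_eq_comp, ← inner_apply_eq_inner_star_apply]
    exact RCLike.nonneg_iff.2 ⟨inner_self_nonneg, inner_self_im _⟩

lemma vectorFunctional_apply (x : H) (a : A) : vectorFunctional π x a = ⟪x, π a x⟫_ℂ := rfl

lemma inner_apply_add_of_mem_orthogonal {S : Submodule ℂ H} (hS : ∀ a, ∀ x ∈ S, π a x ∈ S)
    {m n : H} (hm : m ∈ S) (hn : n ∈ Sᗮ) (a : A) :
    ⟪m, π a (m + n)⟫_ℂ = vectorFunctional π m a := by
  rw [map_add, inner_add_right, vectorFunctional_apply,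
    (Submodule.mem_orthogonal S _).1 (apply_mem_orthogonal π hS a hn) m hm, add_zero]

lemma vectorFunctional_add_of_mem_orthogonal {S : Submodule ℂ H} (hS : ∀ a, ∀ x ∈ S, π a x ∈ S)
    {m n : H} (hm : m ∈ S) (hn : n ∈ Sᗮ) (a : A) :
    vectorFunctional π (m + n) a = vectorFunctional π m a + vectorFunctional π n a := by
  rw [vectorFunctional_apply, inner_add_left, inner_apply_add_of_mem_orthogonal π hS hm hn,
    map_add, inner_add_right, (Submodule.mem_orthogonal' S n).1 hn _ (hS a m hm), zero_add,
    ← vectorFunctional_apply]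

end VectorFunctionals

section GNS

variable {A : Type*} [CStarAlgebra A] [PartialOrder A] [StarOrderedRing A] (F : A →ₚ[ℂ] ℂ)

/-- The canonical cyclic vector of the GNS representation of `F`: the class of `1`. -/
def gnsVector : F.GNS := (F.toPreGNS 1 : F.PreGNS)

lemma gnsStarAlgHom_apply_gnsVector (a : A) :
    F.gnsStarAlgHom a (gnsVector F) = (F.toPreGNS a : F.PreGNS) := by
  change F.gnsNonUnitalStarAlgHom a _ = _
  rw [gnsVector, PositiveLinearMap.gnsNonUnitalStarAlgHom_apply_coe]
  simp

lemma vectorFunctional_gnsVector (a : A) :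
    vectorFunctional F.gnsStarAlgHom (gnsVector F) a = F a := by
  rw [vectorFunctional_apply, gnsStarAlgHom_apply_gnsVector, gnsVector,
    UniformSpace.Completion.inner_coe, PositiveLinearMap.preGNS_inner_def]
  simp

lemma denseRange_gnsVector : DenseRange fun a ↦ F.gnsStarAlgHom a (gnsVector F) := by
  simp_rw [gnsStarAlgHom_apply_gnsVector]
  exact UniformSpace.Completion.denseRange_coe.comp F.toPreGNS.surjective.denseRange
    (UniformSpace.Completion.continuous_coe _)

lemma gnsStarAlgHom_eq_zero {I : Submodule ℂ A} (hI : IsTwoSidedIdeal I)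
    (hF : ∀ x ∈ I, F x = 0) {x : A} (hx : x ∈ I) : F.gnsStarAlgHom x = 0 := by
  refine ContinuousLinearMap.coeFn_injective <|
    (denseRange_gnsVector F).equalizer (map_continuous _) continuous_const (funext fun a ↦ ?_)
  change F.gnsStarAlgHom x (F.gnsStarAlgHom a (gnsVector F)) = 0
  rw [← mul_apply_eq_comp, ← map_mul, ← inner_self_eq_zero (𝕜 := ℂ),
    inner_apply_eq_inner_star_apply, ← mul_apply_eq_comp, ← map_mul,
    ← vectorFunctional_apply, vectorFunctional_gnsVector]
  exact hF _ (hI.mul_mem_left _ _ (hI.mul_mem_right x hx a))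

lemma norm_apply_le_norm_apply_one_mul (a : A) : ‖F a‖ ≤ ‖F 1‖ * ‖a‖ := by
  have hone : ‖F 1‖ = ‖gnsVector F‖ ^ 2 := by
    rw [← vectorFunctional_gnsVector, vectorFunctional_apply, map_one,
      one_apply_eq_self, inner_self_eq_norm_sq_to_K]
    simp
  calc ‖F a‖ = ‖⟪gnsVector F, F.gnsStarAlgHom a (gnsVector F)⟫_ℂ‖ := by
        rw [← vectorFunctional_apply, vectorFunctional_gnsVector]
    _ ≤ ‖gnsVector F‖ * (‖a‖ * ‖gnsVector F‖) :=
        (norm_inner_le_norm _ _).trans <| mul_le_mul_of_nonneg_left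
          ((F.gnsStarAlgHom a).le_of_opNorm_le (NonUnitalStarAlgHom.norm_apply_le _ a) _)
          (norm_nonneg _)
    _ = ‖F 1‖ * ‖a‖ := by rw [hone]; ring

end GNS

section States

instance weakDual_locallyConvexSpace {E : Type*} [NormedAddCommGroup E] [NormedSpace ℂ E] :
    LocallyConvexSpace ℝ (WeakDual ℂ E) :=
  inferInstanceAs (LocallyConvexSpace ℝ (WeakBilin (topDualPairing ℂ E)))

variable {A : Type*} [CStarAlgebra A] [PartialOrder A]

/-- The states of `A` that vanish on `I`, i.e. the states of the quotient `A ⧸ I`, as a subset of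
the dual of `A` with its weak-* topology. -/
def statesVanishingOn (I : Submodule ℂ A) : Set (WeakDual ℂ A) :=
  {f | (∀ a, 0 ≤ a → 0 ≤ f a) ∧ f 1 = 1 ∧ ∀ x ∈ I, f x = 0}

variable {I : Submodule ℂ A}

lemma convex_statesVanishingOn : Convex ℝ (statesVanishingOn I) := by
  rintro f ⟨hf, hf1, hfI⟩ g ⟨hg, hg1, hgI⟩ s t hs ht hst
  have apply (a : A) : (s • f + t • g) a = (s : ℂ) * f a + (t : ℂ) * g a := rfl
  refine ⟨fun a ha ↦ ?_, ?_, fun x hx ↦ ?_⟩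
  · rw [apply]
    exact add_nonneg (mul_nonneg (mod_cast hs) (hf a ha)) (mul_nonneg (mod_cast ht) (hg a ha))
  · rw [apply, hf1, hg1, mul_one, mul_one]
    exact_mod_cast hst
  · rw [apply, hfI x hx, hgI x hx, mul_zero, mul_zero, add_zero]

lemma isClosed_statesVanishingOn : IsClosed (statesVanishingOn I) := by
  simp only [statesVanishingOn, Set.ofPred_and, Set.ofPred_forall]
  refine .inter (isClosed_iInter fun a ↦ isClosed_iInter fun _ ↦ ?_)
    (.inter ?_ (isClosed_iInter fun x ↦ isClosed_iInter fun _ ↦ ?_))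
  · exact isClosed_le continuous_const (WeakDual.eval_continuous a)
  · exact isClosed_eq (WeakDual.eval_continuous 1) continuous_const
  · exact isClosed_eq (WeakDual.eval_continuous x) continuous_const

variable [StarOrderedRing A]

lemma isCompact_statesVanishingOn : IsCompact (statesVanishingOn I) := by
  refine (WeakDual.isCompact_closedBall 0 1).of_isClosed_subset isClosed_statesVanishingOn ?_
  rintro f ⟨hf, hf1, -⟩
  refine mem_closedBall_zero_iff.2 <| ContinuousLinearMap.opNorm_le_bound _ zero_le_one fun a ↦ ?_
  let F : A →ₚ[ℂ] ℂ := .mk₀ (WeakDual.toStrongDual f : A →ₗ[ℂ] ℂ) hf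
  have hF1 : ‖F 1‖ = 1 := by rw [show F 1 = 1 from hf1, norm_one]
  exact hF1 ▸ norm_apply_le_norm_apply_one_mul F a

/-- The state `F / F 1` obtained by normalizing a positive functional `F`; it is the zero functional
when `F 1 = 0`. -/
def normalizedState (F : A →ₚ[ℂ] ℂ) : WeakDual ℂ A :=
  StrongDual.toWeakDual ((F 1)⁻¹ • ⟨F, map_continuous F⟩)

lemma normalizedState_apply (F : A →ₚ[ℂ] ℂ) (a : A) : normalizedState F a = (F 1)⁻¹ * F a := rfl

lemma normalizedState_mem_statesVanishingOn {F : A →ₚ[ℂ] ℂ} (hF : ∀ x ∈ I, F x = 0)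
    (hF1 : F 1 ≠ 0) : normalizedState F ∈ statesVanishingOn I := by
  refine ⟨fun a ha ↦ mul_nonneg ?_ (F.map_nonneg ha), inv_mul_cancel₀ hF1, fun x hx ↦ ?_⟩
  · exact inv_nonneg.2 (F.map_nonneg zero_le_one)
  · rw [normalizedState_apply, hF x hx, mul_zero]

lemma exists_positive_vanishingOn (hI : IsTwoSidedIdeal I) (hcl : IsClosed (I : Set A)) {c : A}
    (hc : c ∉ I) : ∃ F : A →ₚ[ℂ] ℂ, (∀ x ∈ I, F x = 0) ∧ F (star c * c) ≠ 0 := by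
  obtain ⟨φ, hφ, hφc⟩ := (nonnegAddCone I).hyperplane_separation_point
    (hI.neg_star_mul_self_notMem_nonnegAddCone hcl hc)
  have nonneg_of_mem (a x : A) (ha : 0 ≤ a) (hx : x ∈ I) : 0 ≤ φ (a + x) :=
    hφ _ <| subset_closure <| Submodule.mem_sup.2 ⟨a, ha, x, hx, rfl⟩
  have nonneg (a : A) (ha : 0 ≤ a) : 0 ≤ φ a := by simpa using nonneg_of_mem a 0 ha I.zero_mem
  have vanish (x : A) (hx : x ∈ I) : φ x = 0 := by
    have h := nonneg_of_mem 0 x le_rfl hx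
    have h' := nonneg_of_mem 0 (-x) le_rfl (I.neg_mem hx)
    simp only [zero_add, map_neg] at h h'
    linarith
  have vanish_realPart (x : A) (hx : x ∈ I) : φ (realPart x) = 0 := by
    rw [realPart_apply_coe, map_smul, map_add, vanish x hx, vanish _ (hI.star_mem hcl hx),
      add_zero, smul_zero]
  let f : Module.Dual ℂ A := Module.Dual.extendRCLike
    ((φ : A →ₗ[ℝ] ℝ) ∘ₗ (selfAdjoint.submodule ℝ A).subtype ∘ₗ (realPart : A →ₗ[ℝ] selfAdjoint A))
  have f_apply (a : A) : f a = φ (realPart a) - Complex.I * φ (realPart (Complex.I • a)) := rfl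
  have f_of_nonneg (a : A) (ha : 0 ≤ a) : f a = φ a := by
    rw [f_apply, realPart_I_smul, ha.isSelfAdjoint.coe_realPart, ha.isSelfAdjoint.imaginaryPart]
    simp
  refine ⟨.mk₀ f fun a ha ↦ ?_, fun x hx ↦ ?_, ?_⟩
  · rw [f_of_nonneg a ha]
    exact_mod_cast nonneg a ha
  · change f x = 0
    rw [f_apply, vanish_realPart x hx, vanish_realPart _ (I.smul_mem _ hx)]
    simp
  · change f (star c * c) ≠ 0
    rw [f_of_nonneg _ (star_mul_self_nonneg c)]
    rw [map_neg, neg_lt_zero] at hφc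
    exact_mod_cast hφc.ne'

lemma exists_extreme_state (hI : IsTwoSidedIdeal I) (hcl : IsClosed (I : Set A)) {c : A}
    (hc : c ∉ I) : ∃ f ∈ (statesVanishingOn I).extremePoints ℝ, f (star c * c) ≠ 0 := by
  obtain ⟨F, hFI, hFc⟩ := exists_positive_vanishingOn hI hcl hc
  have hF1 : F 1 ≠ 0 := fun h ↦ hFc <| norm_le_zero_iff.1 <| by
    simpa [h] using norm_apply_le_norm_apply_one_mul F (star c * c)
  by_contra! hvanish
  have hsubset : statesVanishingOn I ⊆ {f | f (star c * c) = 0} := by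
    have krein_milman := closure_convexHull_extremePoints (E := WeakDual ℂ A)
      (isCompact_statesVanishingOn (I := I))
    rw [← krein_milman convex_statesVanishingOn]
    refine closure_minimal (convexHull_min hvanish ?_)
      (isClosed_eq (WeakDual.eval_continuous _) continuous_const)
    intro f hf g hg s t _ _ _
    change (s : ℂ) * f (star c * c) + (t : ℂ) * g (star c * c) = 0
    rw [hf.out, hg.out, mul_zero, mul_zero, add_zero]
  exact mul_ne_zero (inv_ne_zero hF1) hFc (hsubset (normalizedState_mem_statesVanishingOn hFI hF1))

lemma eq_apply_one_mul_of_mem_extremePoints {f : WeakDual ℂ A}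
    (hf : f ∈ (statesVanishingOn I).extremePoints ℝ) {G H : A →ₚ[ℂ] ℂ} (hG : ∀ x ∈ I, G x = 0)
    (hH : ∀ x ∈ I, H x = 0) (hGH : ∀ a, f a = G a + H a) (a : A) : G a = G 1 * f a := by
  have eq_zero {F : A →ₚ[ℂ] ℂ} (hF : F 1 = 0) (a : A) : F a = 0 := norm_le_zero_iff.1 <| by
    simpa [hF] using norm_apply_le_norm_apply_one_mul F a
  by_cases hG1 : G 1 = 0
  · rw [eq_zero hG1, hG1, zero_mul]
  have hsum : G 1 + H 1 = 1 := by rw [← hGH, hf.1.2.1]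
  by_cases hH1 : H 1 = 0
  · rw [hGH, eq_zero hH1 a, add_zero, show G 1 = 1 by simpa [hH1] using hsum, one_mul]
  obtain ⟨s, hs, hs'⟩ := RCLike.nonneg_iff_exists_ofReal.1 (G.map_nonneg zero_le_one)
  obtain ⟨t, ht, ht'⟩ := RCLike.nonneg_iff_exists_ofReal.1 (H.map_nonneg zero_le_one)
  rw [← hs', ← ht'] at hsum
  have hseg : f ∈ openSegment ℝ (normalizedState G) (normalizedState H) := by
    refine ⟨s, t, hs.lt_of_ne ?_, ht.lt_of_ne ?_,
      Complex.ofReal_injective (by simpa using hsum), ?_⟩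
    · rintro rfl; simp [← hs'] at hG1
    · rintro rfl; simp [← ht'] at hH1
    · refine DFunLike.ext _ _ fun a ↦ ?_
      change (s : ℂ) * normalizedState G a + (t : ℂ) * normalizedState H a = f a
      rw [normalizedState_apply, normalizedState_apply, show (s : ℂ) = G 1 from hs',
        show (t : ℂ) = H 1 from ht', mul_inv_cancel_left₀ hG1, mul_inv_cancel_left₀ hH1, hGH]
  rw [← hf.2 (normalizedState_mem_statesVanishingOn hG hG1)
      (normalizedState_mem_statesVanishingOn hH hH1) hseg, normalizedState_apply,
    mul_inv_cancel_left₀ hG1]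

end States

section PureStates

variable {A H : Type*} [CStarAlgebra A] [PartialOrder A] [StarOrderedRing A]
  [NormedAddCommGroup H] [InnerProductSpace ℂ H] [CompleteSpace H]
  {π : A →⋆ₐ[ℂ] (H →L[ℂ] H)} {I : Submodule ℂ A} {f : WeakDual ℂ A} {ξ : H}

lemma eq_smul_of_mem_extremePoints (hf : f ∈ (statesVanishingOn I).extremePoints ℝ)
    (hπI : ∀ x ∈ I, π x = 0) (hπf : ∀ a, f a = vectorFunctional π ξ a)
    (hξ : DenseRange fun a ↦ π a ξ) {S : Submodule ℂ H} (hS : ∀ a, ∀ x ∈ S, π a x ∈ S)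
    {m n : H} (hm : m ∈ S) (hn : n ∈ Sᗮ) (hmn : ξ = m + n) :
    m = star (vectorFunctional π m 1) • ξ := by
  have vanish (x : H) : ∀ a ∈ I, vectorFunctional π x a = 0 := fun a ha ↦ by
    rw [vectorFunctional_apply, hπI a ha, zero_apply, inner_zero_right]
  have proportional (a : A) : vectorFunctional π m a = vectorFunctional π m 1 * f a :=
    eq_apply_one_mul_of_mem_extremePoints hf (vanish m) (vanish n) (fun a ↦ by
      rw [hπf, hmn, vectorFunctional_add_of_mem_orthogonal π hS hm hn]) a
  refine sub_eq_zero.1 <| inner_self_eq_zero (𝕜 := ℂ) |>.1 <| congrFun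
    (hξ.equalizer (continuous_const.inner continuous_id) continuous_const (funext fun a ↦ ?_)) _
  change ⟪m - star (vectorFunctional π m 1) • ξ, π a ξ⟫_ℂ = 0
  rw [inner_sub_left, inner_smul_left, ← vectorFunctional_apply π ξ, ← hπf, hmn,
    inner_apply_add_of_mem_orthogonal π hS hm hn, proportional, starRingEnd_apply, star_star,
    sub_self]

lemma eq_bot_or_eq_top_of_mem_extremePoints (hf : f ∈ (statesVanishingOn I).extremePoints ℝ)
    (hπI : ∀ x ∈ I, π x = 0) (hπf : ∀ a, f a = vectorFunctional π ξ a)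
    (hξ : DenseRange fun a ↦ π a ξ) {S : Submodule ℂ H} (hcl : IsClosed (S : Set H))
    (hS : ∀ a, ∀ x ∈ S, π a x ∈ S) : S = ⊥ ∨ S = ⊤ := by
  have := hcl.completeSpace_coe
  obtain ⟨m, hm, n, hn, hmn⟩ := S.exists_add_mem_mem_orthogonal ξ
  have hm_eq := eq_smul_of_mem_extremePoints hf hπI hπf hξ hS hm hn hmn
  rcases eq_or_ne m 0 with rfl | hm0
  · left
    rw [← Submodule.orthogonal_eq_top_iff]
    refine eq_top_of_dense_orbit S.isClosed_orthogonal
      (fun a x hx ↦ apply_mem_orthogonal π hS a hx) hξ ?_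
    rwa [hmn, zero_add]
  · right
    refine eq_top_of_dense_orbit hcl hS hξ ?_
    rw [hm_eq] at hm hm0
    exact (S.smul_mem_iff (left_ne_zero_of_smul hm0)).1 hm

end PureStates

section Unitization

variable {A : Type*} [NonUnitalCStarAlgebra A] {I : Submodule ℂ A}

/-- The subspace `I` of `A`, regarded as a subspace of the unitization of `A`. -/
def unitizationIdeal (I : Submodule ℂ A) : Submodule ℂ (Unitization ℂ A) :=
  I.map (Unitization.inrHom ℂ ℂ A)

lemma inr_mem_unitizationIdeal {x : A} : (x : Unitization ℂ A) ∈ unitizationIdeal I ↔ x ∈ I :=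
  Unitization.inr_injective.mem_set_image

lemma isTwoSidedIdeal_unitizationIdeal (hI : IsTwoSidedIdeal I) :
    IsTwoSidedIdeal (unitizationIdeal I) where
  mul_mem_left := by
    rintro a _ ⟨x, hx, rfl⟩
    refine ⟨a.fst • x + a.snd * x, I.add_mem (I.smul_mem _ hx) (hI.mul_mem_left _ _ hx), ?_⟩
    ext <;> simp
  mul_mem_right := by
    rintro _ ⟨x, hx, rfl⟩ a
    refine ⟨a.fst • x + x * a.snd, I.add_mem (I.smul_mem _ hx) (hI.mul_mem_right _ hx _), ?_⟩
    ext <;> simp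

lemma isClosed_unitizationIdeal (hcl : IsClosed (I : Set A)) :
    IsClosed (unitizationIdeal I : Set (Unitization ℂ A)) :=
  (Unitization.isometry_inr (𝕜 := ℂ) (A := A)).isClosedEmbedding.isClosedMap _ hcl

lemma IsTwoSidedIdeal.mem_of_star_mul_self_mem' (hI : IsTwoSidedIdeal I)
    (hcl : IsClosed (I : Set A)) {x : A} (hx : star x * x ∈ I) : x ∈ I := by
  let _ : PartialOrder (Unitization ℂ A) := CStarAlgebra.spectralOrder _
  have : StarOrderedRing (Unitization ℂ A) := CStarAlgebra.spectralOrderedRing _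
  rw [← inr_mem_unitizationIdeal] at hx ⊢
  rw [Unitization.inr_mul, Unitization.inr_star] at hx
  exact (isTwoSidedIdeal_unitizationIdeal hI).mem_of_star_mul_self_mem
    (isClosed_unitizationIdeal hcl) hx

lemma apply_mem_of_forall_inr_apply_mem {H : Type*} [NormedAddCommGroup H] [InnerProductSpace ℂ H]
    [CompleteSpace H] {π : Unitization ℂ A →⋆ₐ[ℂ] (H →L[ℂ] H)} {S : Submodule ℂ H}
    (hS : ∀ a : A, ∀ v ∈ S, π a v ∈ S) (y : Unitization ℂ A) {v : H} (hv : v ∈ S) : π y v ∈ S := by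
  rw [← Unitization.inl_fst_add_inr_snd_eq y, map_add, add_apply, ← Unitization.algebraMap_eq_inl,
    AlgHomClass.commutes, Algebra.algebraMap_eq_smul_one, smul_apply, one_apply_eq_self]
  exact S.add_mem (S.smul_mem _ hv) (hS _ v hv)

end Unitization

section IrreducibleRepresentations

attribute [local instance] IrreducibleRepOn.normH IrreducibleRepOn.ipsH IrreducibleRepOn.csH

variable {A : Type u} [NonUnitalCStarAlgebra A]

/-- The restriction to `A` of a representation of the unitization of `A` that is irreducible and
nonzero on `A`. -/
def IrreducibleRepOn.ofUnitization {H : Type u} [NormedAddCommGroup H] [InnerProductSpace ℂ H]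
    [CompleteSpace H] (π : Unitization ℂ A →⋆ₐ[ℂ] (H →L[ℂ] H))
    (hirr : ∀ S : Submodule ℂ H, IsClosed (S : Set H) → (∀ y, ∀ v ∈ S, π y v ∈ S) → S = ⊥ ∨ S = ⊤)
    {c : A} (hc : π c ≠ 0) : IrreducibleRepOn A where
  H := H
  π := (π : Unitization ℂ A →⋆ₙₐ[ℂ] (H →L[ℂ] H)).comp (Unitization.inrNonUnitalStarAlgHom ℂ A)
  continuous := map_continuous _
  nonzero := ⟨c, hc⟩
  irreducible S hcl hS := hirr S hcl fun y _ hv ↦ apply_mem_of_forall_inr_apply_mem hS y hv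

lemma IsTwoSidedIdeal.exists_irreducibleRepOn {I : Submodule ℂ A} (hI : IsTwoSidedIdeal I)
    (hcl : IsClosed (I : Set A)) {c : A} (hc : c ∉ I) :
    ∃ ρ : IrreducibleRepOn A, (∀ x ∈ I, ρ.π x = 0) ∧ ρ.π c ≠ 0 := by
  let _ : PartialOrder (Unitization ℂ A) := CStarAlgebra.spectralOrder _
  have : StarOrderedRing (Unitization ℂ A) := CStarAlgebra.spectralOrderedRing _
  have hI' := isTwoSidedIdeal_unitizationIdeal hI
  obtain ⟨f, hf, hfc⟩ := exists_extreme_state hI' (isClosed_unitizationIdeal hcl)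
    (mt inr_mem_unitizationIdeal.1 hc)
  let F : Unitization ℂ A →ₚ[ℂ] ℂ := .mk₀ (WeakDual.toStrongDual f : _ →ₗ[ℂ] ℂ) hf.1.1
  have vanish (x : Unitization ℂ A) (hx : x ∈ unitizationIdeal I) : F.gnsStarAlgHom x = 0 :=
    gnsStarAlgHom_eq_zero F hI' hf.1.2.2 hx
  have hFc : F.gnsStarAlgHom c ≠ 0 := fun h ↦ hfc <| by
    change F (star (c : Unitization ℂ A) * c) = 0
    rw [← vectorFunctional_gnsVector, vectorFunctional_apply, map_mul, h, mul_zero, zero_apply,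
      inner_zero_right]
  have hirr (S : Submodule ℂ F.GNS) (hcl : IsClosed (S : Set F.GNS))
      (hS : ∀ y, ∀ v ∈ S, F.gnsStarAlgHom y v ∈ S) : S = ⊥ ∨ S = ⊤ :=
    eq_bot_or_eq_top_of_mem_extremePoints hf vanish (fun a ↦ (vectorFunctional_gnsVector F a).symm)
      (denseRange_gnsVector F) hcl hS
  exact ⟨.ofUnitization F.gnsStarAlgHom hirr hFc,
    fun x hx ↦ vanish _ (inr_mem_unitizationIdeal.2 hx), hFc⟩

end IrreducibleRepresentations

section ClosedPrimeIdeals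

attribute [local instance] IrreducibleRepOn.normH IrreducibleRepOn.ipsH IrreducibleRepOn.csH

lemma exists_isSelfAdjoint_mul_notMem {A : Type*} [NonUnitalCStarAlgebra A] [PartialOrder A]
    [StarOrderedRing A] {P : Set A} (hcl : IsClosed P) {k : A} (hk : 0 ≤ k) (hkP : k ∉ P) :
    ∃ q r : A, IsSelfAdjoint (q * k) ∧ r * k * (q * k) = q * k ∧ q * k ∉ P := by
  obtain ⟨ε, hε, hball⟩ := Metric.nhds_basis_closedBall.mem_iff.1 (hcl.isOpen_compl.mem_nhds hkP)
  have max_ne (t : ℝ) : max t ε ≠ 0 := (hε.trans_le (le_max_right t ε)).ne'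
  let q (t : ℝ) : ℝ := max (t - ε) 0 / max t ε
  let r (t : ℝ) : ℝ := t / max t ε ^ 2
  have hq : Continuous q := .div (by fun_prop) (by fun_prop) max_ne
  have hr : Continuous r := .div (by fun_prop) (by fun_prop) fun t ↦ pow_ne_zero 2 (max_ne t)
  have hq0 : q 0 = 0 := by simp [q, hε.le]
  have hr0 : r 0 = 0 := zero_div _
  have cfc_mul_self {f : ℝ → ℝ} (hf : Continuous f) (hf0 : f 0 = 0) :
      cfcₙ f k * k = cfcₙ (fun t ↦ f t * t) k := by
    rw [cfcₙ_mul f (fun t ↦ t) k hf.continuousOn hf0, cfcₙ_id' ℝ k]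
  have q_mul (t : ℝ) : q t * t = max (t - ε) 0 := by
    rcases le_total t ε with h | h
    · simp [q, h]
    · simp [q, h, (hε.trans_le h).ne']
  refine ⟨cfcₙ q k, cfcₙ r k, ?_, ?_, fun hmem ↦ hball ?_ hmem⟩
  · rw [cfc_mul_self hq hq0]
    exact cfcₙ_predicate _ _
  · rw [cfc_mul_self hq hq0, cfc_mul_self hr hr0,
      ← cfcₙ_mul _ _ k (by fun_prop) (by simp) (by fun_prop) (by simp)]
    refine cfcₙ_congr fun t _ ↦ ?_
    rcases le_total t ε with h | h
    · simp [q, h]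
    · have := (hε.trans_le h).ne'
      simp only [r, max_eq_left h]
      field_simp
  · rw [mem_closedBall_iff_norm, cfc_mul_self hq hq0]
    nth_rewrite 2 [← cfcₙ_id' ℝ k]
    rw [← cfcₙ_sub _ _ k (by fun_prop) (by simp) (by fun_prop) rfl]
    refine norm_cfcₙ_le fun t ht ↦ ?_
    have ht0 := quasispectrum_nonneg_of_nonneg k hk t ht
    rw [q_mul, Real.norm_eq_abs, abs_le]
    constructor <;> rcases max_cases (t - ε) 0 with h | h <;> linarith

/-- The list `l` consists of mutually orthogonal self-adjoint elements outside `P`. -/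
structure IsOrthogonalOutside {A : Type*} [NonUnitalRing A] [StarRing A] [Module ℂ A]
    (P : Submodule ℂ A) (l : List A) : Prop where
  isSelfAdjoint : ∀ h ∈ l, IsSelfAdjoint h
  notMem : ∀ h ∈ l, h ∉ P
  pairwise : l.Pairwise (· * · = 0)

lemma IsPrimeIdeal.exists_notMem_forall_notMem {R A : Type*} [Semiring R] [NonUnitalRing A]
    [Module R A] {P : Submodule R A} (hP : IsPrimeIdeal P) {l : List A} (hl : ∀ h ∈ l, h ∉ P) :
    ∃ d ∉ P, ∀ I : Submodule R A, IsTwoSidedIdeal I → d ∉ I → ∀ h ∈ l, h ∉ I := by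
  induction l with
  | nil => simpa using hP.exists_notMem
  | cons h l ih =>
    rw [List.forall_mem_cons] at hl
    obtain ⟨d, hd, hdl⟩ := ih hl.2
    obtain ⟨a, ha⟩ : ∃ a, d * a * h ∉ P := by
      by_contra! hmem
      exact (hP.mem_or_mem d h hmem).elim hd hl.1
    refine ⟨d * a * h, ha, fun I hI hmem ↦ List.forall_mem_cons.2 ⟨?_, hdl I hI ?_⟩⟩
    · exact fun hh ↦ hmem (hI.mul_mem_left _ h hh)
    · exact fun hd ↦ hmem (hI.mul_mem_right _ (hI.mul_mem_right d hd a) h)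

variable {A : Type u} [NonUnitalCStarAlgebra A]

/-- The kernel of an irreducible representation of `A`. -/
def IrreducibleRepOn.ker (ρ : IrreducibleRepOn A) : Submodule ℂ A :=
  LinearMap.ker (ρ.π : A →ₗ[ℂ] (ρ.H →L[ℂ] ρ.H))

lemma IrreducibleRepOn.mem_ker {ρ : IrreducibleRepOn A} {a : A} : a ∈ ρ.ker ↔ ρ.π a = 0 := Iff.rfl

lemma IrreducibleRepOn.isTwoSidedIdeal_ker (ρ : IrreducibleRepOn A) : IsTwoSidedIdeal ρ.ker where
  mul_mem_left a x hx := by rw [mem_ker] at hx ⊢; rw [map_mul, hx, mul_zero]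
  mul_mem_right x hx a := by rw [mem_ker] at hx ⊢; rw [map_mul, hx, zero_mul]

lemma IsOrthogonalOutside.length_le_finrank {ρ : IrreducibleRepOn A} [FiniteDimensional ℂ ρ.H]
    {l : List A} (hl : IsOrthogonalOutside ρ.ker l) : l.length ≤ Module.finrank ℂ ρ.H := by
  have exists_apply_ne_zero (i : Fin l.length) : ∃ v, ρ.π (l.get i) v ≠ 0 := by
    by_contra! hzero
    exact hl.notMem _ (l.get_mem i) (ContinuousLinearMap.ext hzero)
  choose v hv using exists_apply_ne_zero
  have horth (i j : Fin l.length) (hij : i ≠ j) : l.get i * l.get j = 0 := by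
    rcases hij.lt_or_gt with hlt | hlt
    · exact List.pairwise_iff_get.1 hl.pairwise i j hlt
    · rw [← star_eq_zero, star_mul, (hl.isSelfAdjoint _ (l.get_mem i)).star_eq,
        (hl.isSelfAdjoint _ (l.get_mem j)).star_eq]
      exact List.pairwise_iff_get.1 hl.pairwise j i hlt
  have hlin : LinearIndependent ℂ fun i ↦ ρ.π (l.get i) (v i) := by
    refine linearIndependent_of_ne_zero_of_inner_eq_zero hv fun i j hij ↦ ?_
    change ⟪ρ.π (l.get i) (v i), ρ.π (l.get j) (v j)⟫_ℂ = 0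
    rw [← ContinuousLinearMap.adjoint_inner_right, ← ContinuousLinearMap.star_eq_adjoint,
      ← map_star, (hl.isSelfAdjoint _ (l.get_mem i)).star_eq, ← mul_apply_eq_comp, ← map_mul,
      horth i j hij, map_zero, zero_apply, inner_zero_right]
  simpa using hlin.fintype_card_le_finrank

variable {P : Submodule ℂ A}

lemma IsPrimeIdeal.exists_irreducibleRepOn (hP : IsPrimeIdeal P) (hcl : IsClosed (P : Set A))
    {l : List A} (hl : ∀ h ∈ l, h ∉ P) :
    ∃ ρ : IrreducibleRepOn A, P ≤ ρ.ker ∧ ∀ h ∈ l, h ∉ ρ.ker := by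
  obtain ⟨d, hd, hdl⟩ := hP.exists_notMem_forall_notMem hl
  obtain ⟨ρ, hρP, hρd⟩ := hP.toIsTwoSidedIdeal.exists_irreducibleRepOn hcl hd
  exact ⟨ρ, hρP, hdl _ ρ.isTwoSidedIdeal_ker hρd⟩

lemma IsPrimeIdeal.exists_maximal_isOrthogonalOutside (hA : IsSubhomogeneous A)
    (hP : IsPrimeIdeal P) (hcl : IsClosed (P : Set A)) :
    ∃ h l, IsOrthogonalOutside P (h :: l) ∧ ∀ y z, ¬ IsOrthogonalOutside P (y :: z :: l) := by
  obtain ⟨n, hn⟩ := hA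
  have bounded : BddAbove (List.length '' {l | IsOrthogonalOutside P l}) := by
    refine ⟨n, Set.forall_mem_image.2 fun l hl ↦ ?_⟩
    obtain ⟨ρ, -, hρl⟩ := hP.exists_irreducibleRepOn hcl hl.notMem
    have := (hn ρ).1
    have hlρ : IsOrthogonalOutside ρ.ker l := ⟨hl.isSelfAdjoint, hρl, hl.pairwise⟩
    exact hlρ.length_le_finrank.trans (hn ρ).2
  obtain ⟨e, he⟩ := hP.exists_notMem
  have singleton : IsOrthogonalOutside P [star e * e] :=
    ⟨by simp, by simpa using mt (hP.mem_of_star_mul_self_mem' hcl) he, List.pairwise_singleton _ _⟩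
  obtain ⟨l, hl, hmax⟩ := Nat.sSup_mem ⟨_, Set.mem_image_of_mem _ singleton⟩ bounded
  have le_length {l' : List A} (hl' : IsOrthogonalOutside P l') : l'.length ≤ l.length :=
    (le_csSup bounded (Set.mem_image_of_mem _ hl')).trans_eq hmax.symm
  cases l with
  | nil => exact absurd (le_length singleton) (by simp)
  | cons h l => exact ⟨h, l, hl, fun y z hyz ↦ absurd (le_length hyz) (by simp)⟩

/- Functional calculus in some `k ∈ ker ρ` outside `P` replaces `h` by two orthogonal elements: a
piece `q * k` of `k`, and the compression `z` of `h` away from the support of that piece. The latter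
stays outside `P` because `ρ` does not distinguish it from `h`. -/
lemma IsOrthogonalOutside.exists_cons_cons (hP : IsPrimeIdeal P) (hcl : IsClosed (P : Set A))
    {h : A} {l : List A} (hl : IsOrthogonalOutside P (h :: l)) {ρ : IrreducibleRepOn A}
    (hρP : P ≤ ρ.ker) (hρh : h ∉ ρ.ker) {a : A} (haρ : a ∈ ρ.ker) (haP : a ∉ P) :
    ∃ y z, IsOrthogonalOutside P (y :: z :: l) := by
  let _ : PartialOrder A := CStarAlgebra.spectralOrder _
  have : StarOrderedRing A := CStarAlgebra.spectralOrderedRing _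
  have hρ := ρ.isTwoSidedIdeal_ker
  obtain ⟨-, hsal⟩ := List.forall_mem_cons.1 hl.isSelfAdjoint
  obtain ⟨hhP, hlP⟩ := List.forall_mem_cons.1 hl.notMem
  obtain ⟨hhl, hll⟩ := List.pairwise_cons.1 hl.pairwise
  have star_mul_self_notMem {x : A} : x ∉ P → star x * x ∉ P :=
    mt (hP.mem_of_star_mul_self_mem' hcl)
  obtain ⟨b, hb⟩ : ∃ b, a * b * h ∉ P := by
    by_contra! hmem
    exact (hP.mem_or_mem a h hmem).elim haP hhP
  set k := star (a * b * h) * (a * b * h) with hk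
  have hkρ : k ∈ ρ.ker :=
    hρ.mul_mem_left _ _ (hρ.mul_mem_right _ (hρ.mul_mem_right a haρ b) h)
  have hkl (g : A) (hg : g ∈ l) : k * g = 0 := by simp only [hk, mul_assoc, hhl g hg, mul_zero]
  obtain ⟨q, r, hqk, hrq, hqP⟩ :=
    exists_isSelfAdjoint_mul_notMem hcl (star_mul_self_nonneg _) (star_mul_self_notMem hb)
  set z := h - h * (r * k) with hz
  have hzP : z ∉ P := fun hmem ↦ hρh <| by
    rw [← sub_add_cancel h (h * (r * k))]
    exact ρ.ker.add_mem (hρP hmem) (hρ.mul_mem_left _ _ (hρ.mul_mem_left _ _ hkρ))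
  refine ⟨star z * z, q * k, ?_, ?_, ?_⟩
  · exact List.forall_mem_cons.2 ⟨.star_mul_self z, List.forall_mem_cons.2 ⟨hqk, hsal⟩⟩
  · exact List.forall_mem_cons.2 ⟨star_mul_self_notMem hzP, List.forall_mem_cons.2 ⟨hqP, hlP⟩⟩
  · simp only [List.pairwise_cons, List.mem_cons, forall_eq_or_imp]
    refine ⟨⟨?_, fun g hg ↦ ?_⟩, fun g hg ↦ ?_, hll⟩
    · rw [mul_assoc, hz, sub_mul, mul_assoc, hrq, sub_self, mul_zero]
    · simp only [hz, mul_assoc, sub_mul, hhl g hg, hkl g hg, mul_zero, sub_self]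
    · rw [mul_assoc, hkl g hg, mul_zero]

theorem IsPrimeIdeal.exists_irreducibleRepOn_ker_eq (hA : IsSubhomogeneous A) (hP : IsPrimeIdeal P)
    (hcl : IsClosed (P : Set A)) : ∃ ρ : IrreducibleRepOn A, ρ.ker = P := by
  obtain ⟨h, l, hl, hmax⟩ := hP.exists_maximal_isOrthogonalOutside hA hcl
  obtain ⟨ρ, hρP, hρl⟩ := hP.exists_irreducibleRepOn hcl hl.notMem
  refine ⟨ρ, le_antisymm (fun a haρ ↦ ?_) hρP⟩
  by_contra haP
  obtain ⟨y, z, hyz⟩ := hl.exists_cons_cons hP hcl hρP (hρl h List.mem_cons_self) haρ haP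
  exact hmax y z hyz

end ClosedPrimeIdeals

section Burnside

variable {K V : Type*} [Field K] [AddCommGroup V] [Module K V] [FiniteDimensional K V]

lemma isSimpleRing_moduleEnd [Nontrivial V] : IsSimpleRing (Module.End K V) :=
  have : Nonempty (Fin (Module.finrank K V)) := Fin.pos_iff_nonempty.1 Module.finrank_pos
  .of_ringEquiv (algEquivMatrix (Module.finBasis K V)).symm.toRingEquiv inferInstance

variable [IsAlgClosed K]

theorem subalgebra_eq_top_of_isSimpleModule (S : Subalgebra K (Module.End K V))
    [IsSimpleModule S V] : S = ⊤ := by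
  refine eq_top_iff.2 fun T _ ↦ ?_
  let f : Module.End (Module.End S V) V :=
    { toFun := T
      map_add' := T.map_add
      map_smul' := fun D v ↦ by
        obtain ⟨c, rfl⟩ := (IsSimpleModule.algebraMap_end_bijective_of_isAlgClosed K).2 D
        exact T.map_smul c v }
  have : Module.Finite (Module.End S V) V := .of_restrictScalars_finite K _ _
  obtain ⟨s, hs⟩ := Module.Finite.toModuleEnd_moduleEnd_surjective f
  have hsT : (s : Module.End K V) = T := LinearMap.ext fun v ↦ congr($hs v)
  exact hsT ▸ s.2

theorem nonUnitalSubalgebra_eq_top_of_irreducible {S : NonUnitalSubalgebra K (Module.End K V)}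
    (hne : ∃ s ∈ S, s ≠ 0)
    (hirr : ∀ W : Submodule K V, (∀ s ∈ S, ∀ v ∈ W, s v ∈ W) → W = ⊥ ∨ W = ⊤) : S = ⊤ := by
  obtain ⟨s, hs, hs0⟩ := hne
  obtain ⟨v, hv⟩ := DFunLike.ne_iff.1 hs0
  have : Nontrivial V := ⟨s v, 0, hv⟩
  have hsimple : IsSimpleModule (Algebra.adjoin K (S : Set (Module.End K V))) V :=
    isSimpleModule_iff _ _ |>.2
      { eq_bot_or_eq_top W := (hirr (W.restrictScalars K) fun s hs v hv ↦
          W.smul_mem ⟨s, Algebra.subset_adjoin hs⟩ hv).imp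
            (Submodule.restrictScalars_eq_bot_iff K _ V).1
            (Submodule.restrictScalars_eq_top_iff K _ V).1 }
  have hdecomp (T : Module.End K V) : ∃ c : K, ∃ t ∈ S, algebraMap K _ c + t = T := by
    have hT : T ∈ (NonUnitalSubalgebra.unitization S).range := by
      rw [NonUnitalSubalgebra.unitization_range,
        subalgebra_eq_top_of_isSimpleModule (Algebra.adjoin K _)]
      exact Algebra.mem_top
    obtain ⟨x, rfl⟩ := hT
    exact ⟨x.fst, x.snd, x.snd.2, rfl⟩
  let I : TwoSidedIdeal (Module.End K V) := .mk' S S.zero_mem S.add_mem S.neg_mem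
    (fun {T t} ht ↦ by
      obtain ⟨c, r, hr, rfl⟩ := hdecomp T
      rw [add_mul, ← Algebra.smul_def]
      exact S.add_mem (S.smul_mem c ht) (S.mul_mem hr ht))
    (fun {t T} ht ↦ by
      obtain ⟨c, r, hr, rfl⟩ := hdecomp T
      rw [mul_add, ← Algebra.commutes, ← Algebra.smul_def]
      exact S.add_mem (S.smul_mem c ht) (S.mul_mem ht hr))
  have hI (T : Module.End K V) : T ∈ I ↔ T ∈ S := TwoSidedIdeal.mem_mk' ..
  have := isSimpleRing_moduleEnd (K := K) (V := V)
  have hone : (1 : Module.End K V) ∈ I := IsSimpleRing.one_mem_of_ne_zero_mem I hs0 ((hI s).2 hs)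
  exact eq_top_iff.2 fun T _ ↦ (hI T).1 (by simpa using I.mul_mem_left T 1 hone)

end Burnside

section IrreducibleMatrixRepresentation

attribute [local instance] IrreducibleRepOn.normH IrreducibleRepOn.ipsH IrreducibleRepOn.csH

variable {A : Type u} [NonUnitalCStarAlgebra A]

theorem IrreducibleRepOn.surjective_of_finiteDimensional (ρ : IrreducibleRepOn A)
    [FiniteDimensional ℂ ρ.H] : Function.Surjective ρ.π := by
  let L : A →ₙₐ[ℂ] Module.End ℂ ρ.H :=
    { (ContinuousLinearMap.coeLM ℂ).comp (ρ.π : A →ₗ[ℂ] ρ.H →L[ℂ] ρ.H) with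
      map_zero' := by simp
      map_mul' := fun a c ↦ congr(ContinuousLinearMap.toLinearMap $(map_mul ρ.π a c)) }
  have htop : NonUnitalAlgHom.range L = ⊤ := by
    refine nonUnitalSubalgebra_eq_top_of_irreducible ?_ fun W hW ↦
      ρ.irreducible W W.closed_of_finiteDimensional fun a v hv ↦ hW (L a) ⟨a, rfl⟩ v hv
    obtain ⟨a, ha⟩ := ρ.nonzero
    exact ⟨L a, ⟨a, rfl⟩, fun h ↦ ha (ContinuousLinearMap.coe_injective h)⟩
  intro T
  obtain ⟨a, ha⟩ : (T : Module.End ℂ ρ.H) ∈ NonUnitalAlgHom.range L := htop ▸ trivial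
  exact ⟨a, ContinuousLinearMap.coe_injective ha⟩

/-- The identification of the operators on a finite-dimensional Hilbert space with complex
matrices, through an orthonormal basis. -/
def starAlgEquivCStarMatrix (H : Type*) [NormedAddCommGroup H] [InnerProductSpace ℂ H]
    [FiniteDimensional ℂ H] [CompleteSpace H] :
    (H →L[ℂ] H) ≃⋆ₐ[ℂ] CStarMatrix (Fin (Module.finrank ℂ H)) (Fin (Module.finrank ℂ H)) ℂ :=
  (stdOrthonormalBasis ℂ H).repr.conjStarAlgEquiv.trans <|
    Matrix.toEuclideanCLM.symm.trans CStarMatrix.ofMatrixStarAlgEquiv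

theorem IrreducibleRepOn.exists_surjective_cstarMatrix (ρ : IrreducibleRepOn A)
    [FiniteDimensional ℂ ρ.H] : ∃ (k : ℕ) (R : A →⋆ₙₐ[ℂ] CStarMatrix (Fin k) (Fin k) ℂ),
      Function.Surjective R ∧ ∀ a, R a = 0 ↔ a ∈ ρ.ker := by
  let E := starAlgEquivCStarMatrix ρ.H
  exact ⟨_, (StarAlgEquiv.toNonUnitalStarAlgHom E).comp ρ.π,
    (EquivLike.surjective E).comp ρ.surjective_of_finiteDimensional,
    fun a ↦ map_eq_zero_iff E (EquivLike.injective E)⟩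

end IrreducibleMatrixRepresentation

section Quasiregular

/-- Left quasi-regularity of an element `g` of a non-unital ring, i.e. left invertibility of
`1 + g` in the unitization. It is stated inside the ring so as to be transported by
non-unital ring homomorphisms. -/
def IsLeftQuasiregular {X : Type*} [NonUnitalRing X] (g : X) : Prop :=
  ∃ z, g + z + z * g = 0

lemma IsLeftQuasiregular.isQuasiregular {X : Type*} [NonUnitalRing X] [StarRing X] {g : X}
    (hg : IsLeftQuasiregular g) (hg' : IsLeftQuasiregular (star g)) : IsQuasiregular g := by
  obtain ⟨z, hz⟩ := hg
  obtain ⟨w, hw⟩ := hg'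
  rw [isQuasiregular_iff', isUnit_iff_exists_and_exists]
  refine ⟨⟨.equiv (star w), congrArg PreQuasiregular.equiv ?_⟩,
    ⟨.equiv z, congrArg PreQuasiregular.equiv hz⟩⟩
  have := congrArg star hw
  rw [star_add, star_add, star_mul, star_star, star_zero] at this
  rw [← this, add_comm g]
  rfl

lemma isLeftQuasiregular_of_isQuasiregular {X : Type*} [NonUnitalRing X] {g : X}
    (hg : IsQuasiregular g) : IsLeftQuasiregular g := by
  obtain ⟨z, -, hz⟩ := isQuasiregular_iff.1 hg
  exact ⟨z, hz⟩

lemma isQuasiregular_star {X : Type*} [NonUnitalRing X] [StarRing X] {g : X}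
    (hg : IsQuasiregular g) : IsQuasiregular (star g) := by
  obtain ⟨z, hgz, hzg⟩ := isQuasiregular_iff.1 hg
  refine isQuasiregular_iff.2 ⟨star z, ?_, ?_⟩
  · rw [← star_add, ← star_mul, ← star_add, add_comm z g, hzg, star_zero]
  · rw [← star_add, ← star_mul, ← star_add, add_comm g z, hgz, star_zero]

lemma mem_quasispectrum_iff_of_ne_zero {𝕜 X : Type*} [Field 𝕜] [NonUnitalRing X] [Module 𝕜 X]
    {c : 𝕜} (hc : c ≠ 0) {x : X} : c ∈ quasispectrum 𝕜 x ↔ ¬IsQuasiregular (-(c⁻¹ • x)) := by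
  lift c to 𝕜ˣ using hc.isUnit
  exact ⟨fun h ↦ by simpa [Units.smul_def] using h c.isUnit, fun h ↦
    quasispectrum.mem_of_not_quasiregular x (by simpa [Units.smul_def] using h)⟩

lemma isQuasiregular_of_norm_lt_one (𝕜 : Type*) {X : Type*} [NontriviallyNormedField 𝕜]
    [CompleteSpace 𝕜] [NonUnitalNormedRing X] [NormedSpace 𝕜 X] [IsScalarTower 𝕜 X X]
    [SMulCommClass 𝕜 X X] [CompleteSpace X] {x : X} (hx : ‖x‖ < 1) : IsQuasiregular x := by
  let y : WithLp 1 (Unitization 𝕜 X) := .toLp 1 x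
  have hy : ‖-y‖ < 1 := by rwa [norm_neg, WithLp.unitization_norm_inr]
  have hunit : IsUnit (1 + y) := sub_neg_eq_add 1 y ▸ isUnit_one_sub_of_norm_lt_one hy
  exact (isQuasiregular_iff_isUnit' 𝕜).2
    (hunit.map (WithLp.unitizationAlgEquiv (𝕜 := 𝕜) (A := X) 𝕜))

section CStarAlgebra

variable {C : Type*} [NonUnitalCStarAlgebra C]

lemma norm_star_mul_self_mem_quasispectrum (c : C) :
    ‖star c * c‖ ∈ quasispectrum ℝ (star c * c) := by
  let _ := CStarAlgebra.spectralOrder C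
  have _ := CStarAlgebra.spectralOrderedRing C
  rw [Unitization.quasispectrum_eq_spectrum_inr' ℝ ℂ, ← Unitization.norm_inr (𝕜 := ℂ)]
  exact CStarAlgebra.norm_mem_spectrum_of_nonneg
    (Unitization.inr_nonneg_iff.2 (star_mul_self_nonneg c))

lemma quasispectrum_star_mul_self_subset (c : C) :
    quasispectrum ℂ (star c * c) ⊆ {z : ℂ | z.im = 0 ∧ 0 ≤ z.re} := by
  let _ := CStarAlgebra.spectralOrder C
  have _ := CStarAlgebra.spectralOrderedRing C
  intro z hz
  rw [← (IsSelfAdjoint.star_mul_self c).quasispectrumRestricts.algebraMap_image] at hz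
  obtain ⟨t, ht, rfl⟩ := hz
  exact ⟨Complex.ofReal_im t, quasispectrum_nonneg_of_nonneg _ (star_mul_self_nonneg c) t ht⟩

/-- If `t` is a limit of elements `v` of the kernel of `ψ` and `ψ s` is the normalized adjoint of
`ψ t ≠ 0`, then some `s * (t - v)` has norm less than one, although `-1` times its image is not
quasiregular. -/
theorem isClosed_setOf_map_eq_zero {X : Type*} [NonUnitalNormedRing X] [NormedSpace ℂ X]
    [IsScalarTower ℂ X X] [SMulCommClass ℂ X X] [CompleteSpace X] (ψ : X →ₙ+* C)
    (hψ : Function.Surjective ψ) : IsClosed {x | ψ x = 0} := by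
  refine isClosed_of_closure_subset fun t ht ↦ by_contra fun (hc : ψ t ≠ 0) ↦ ?_
  have hr : IsUnit ‖star (ψ t) * ψ t‖ := by
    simpa [CStarRing.norm_star_mul_self] using hc
  obtain ⟨s, hs⟩ := hψ (hr.unit⁻¹ • star (ψ t))
  have hcont : ContinuousAt (fun v ↦ ‖-(s * (t - v))‖) t := by fun_prop
  obtain ⟨v, hv1, hv⟩ : ∃ v, ‖-(s * (t - v))‖ < 1 ∧ ψ v = 0 :=
    mem_closure_iff_nhds.1 ht _ (hcont.eventually_lt_const (by simp))
  refine norm_star_mul_self_mem_quasispectrum (ψ t) hr ?_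
  simpa [hs, hv, smul_mul_assoc] using (isQuasiregular_of_norm_lt_one ℂ hv1).map ψ

end CStarAlgebra

end Quasiregular

section ProjectiveTensorNorm

variable {A B : Type u} [NonUnitalNormedRing A] [NormedSpace ℂ A] [NonUnitalNormedRing B]
  [NormedSpace ℂ B]

lemma bsProjNorm_tmul_le (a : A) (b : B) : bsProjNorm (a ⊗ₜ[ℂ] b) ≤ ‖a‖ * ‖b‖ := by
  refine csInf_le ⟨0, ?_⟩ ⟨1, fun _ ↦ a, fun _ ↦ b, by simp, by simp⟩
  rintro _ ⟨n, a, b, -, rfl⟩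
  positivity

lemma norm_le_mul_bsProjNorm {E : Type*} [SeminormedAddCommGroup E] [NormedSpace ℂ E]
    (f : A ⊗[ℂ] B →ₗ[ℂ] E) {C : ℝ} (hC : 0 ≤ C) (hf : ∀ a b, ‖f (a ⊗ₜ[ℂ] b)‖ ≤ C * (‖a‖ * ‖b‖))
    (u : A ⊗[ℂ] B) : ‖f u‖ ≤ C * bsProjNorm u := by
  rw [bsProjNorm, ← smul_eq_mul, ← Real.sInf_smul_of_nonneg hC]
  obtain ⟨n, a, b, hu⟩ := TensorProduct.exists_sum_tmul_eq u
  refine le_csInf (Set.Nonempty.smul_set ⟨_, n, a, b, hu, rfl⟩) ?_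
  rintro _ ⟨_, ⟨n, a, b, rfl, rfl⟩, rfl⟩
  rw [map_sum]
  refine le_of_le_of_eq ?_ (Finset.mul_sum ..).symm
  exact norm_sum_le_of_le _ fun i _ ↦ hf _ _

end ProjectiveTensorNorm

namespace IsTensorCompletion

section Banach

variable {A B X : Type u} [NonUnitalNormedRing A] [StarRing A] [NormedSpace ℂ A]
  [NonUnitalNormedRing B] [StarRing B] [NormedSpace ℂ B]
  [NonUnitalNormedRing X] [StarRing X] [NormedSpace ℂ X] [CompleteSpace X]
  {ι : A ⊗[ℂ] B →ₗ[ℂ] X}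

theorem induction_on {ν : A ⊗[ℂ] B → ℝ} (hX : IsTensorCompletion ν X ι) {p : X → Prop}
    (isClosed : IsClosed {x | p x}) (tmul : ∀ a b, p (ι (a ⊗ₜ[ℂ] b)))
    (add : ∀ x y, p x → p y → p (x + y)) (x : X) : p x := by
  refine hX.dense.induction_on x isClosed fun u ↦ ?_
  induction u using TensorProduct.induction_on with
  | zero => simpa using tmul 0 0
  | tmul a b => exact tmul a b
  | add u v hu hv => exact map_add ι u v ▸ add _ _ hu hv

variable (hX : IsTensorCompletion bsProjNorm X ι)
include hX

lemma norm_tmul_le (a : A) (b : B) : ‖ι (a ⊗ₜ[ℂ] b)‖ ≤ ‖a‖ * ‖b‖ :=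
  (hX.norm_eq _).trans_le (bsProjNorm_tmul_le a b)

lemma continuous_tmul_left (b : B) : Continuous fun a : A ↦ ι (a ⊗ₜ[ℂ] b) :=
  AddMonoidHomClass.continuous_of_bound (ι ∘ₗ (TensorProduct.mk ℂ A B).flip b) ‖b‖ fun a ↦
    (hX.norm_tmul_le a b).trans_eq (mul_comm _ _)

lemma continuous_tmul_right (a : A) : Continuous fun b : B ↦ ι (a ⊗ₜ[ℂ] b) :=
  AddMonoidHomClass.continuous_of_bound (ι ∘ₗ TensorProduct.mk ℂ A B a) ‖a‖ (hX.norm_tmul_le a)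

variable [CompleteSpace B]

omit hX in
/-- The slice map `ψ ⊗ id` of a bounded functional `ψ` on the first factor, extended to the
completion. -/
def slice (ι : A ⊗[ℂ] B →ₗ[ℂ] X) (ψ : A →L[ℂ] ℂ) : X →L[ℂ] B :=
  ((TensorProduct.lid ℂ B).toLinearMap ∘ₗ (ψ : A →ₗ[ℂ] ℂ).rTensor B).extendOfNorm ι

lemma slice_tmul (ψ : A →L[ℂ] ℂ) (a : A) (b : B) :
    slice ι ψ (ι (a ⊗ₜ[ℂ] b)) = ψ a • b := by
  refine LinearMap.extendOfNorm_eq hX.dense ⟨‖ψ‖, fun u ↦ ?_⟩ (a ⊗ₜ[ℂ] b)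
  rw [hX.norm_eq]
  refine norm_le_mul_bsProjNorm _ (norm_nonneg ψ) (fun a b ↦ ?_) u
  calc ‖ψ a • b‖ = ‖ψ a‖ * ‖b‖ := norm_smul _ _
    _ ≤ ‖ψ‖ * ‖a‖ * ‖b‖ := by gcongr; exact ψ.le_opNorm a
    _ = ‖ψ‖ * (‖a‖ * ‖b‖) := mul_assoc _ _ _

end Banach

section Amplification

variable {A B X : Type u} [NonUnitalCStarAlgebra A] [NonUnitalCStarAlgebra B]
  [NonUnitalNormedRing X] [StarRing X] [NormedSpace ℂ X] [CompleteSpace X]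
  {ι : A ⊗[ℂ] B →ₗ[ℂ] X} {n : Type*} [Fintype n]

/-- A coefficient of a matrix representation, as a bounded functional. -/
def coefficient (R : A →⋆ₙₐ[ℂ] CStarMatrix n n ℂ) (i j : n) : A →L[ℂ] ℂ :=
  LinearMap.mkContinuous
    { toFun a := R a i j
      map_add' a c := by rw [map_add, CStarMatrix.add_apply]
      map_smul' c a := by rw [map_smul, CStarMatrix.smul_apply, RingHom.id_apply] } 1
    fun a ↦ by
      rw [one_mul]
      exact (CStarMatrix.norm_entry_le_norm (M := R a)).trans
        (NonUnitalStarAlgHom.norm_apply_le R a)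

variable (hX : IsTensorCompletion bsProjNorm X ι)
  (R : A →⋆ₙₐ[ℂ] CStarMatrix n n ℂ)
include hX

lemma slice_coefficient_mul (i j : n) (x y : X) :
    slice ι (coefficient R i j) (x * y) =
      ∑ l, slice ι (coefficient R i l) x * slice ι (coefficient R l j) y := by
  induction x using hX.induction_on with
  | isClosed => exact isClosed_eq (by fun_prop) (by fun_prop)
  | add x x' hx hx' => simp only [add_mul, map_add, hx, hx', Finset.sum_add_distrib]
  | tmul a b =>
    induction y using hX.induction_on with
    | isClosed => exact isClosed_eq (by fun_prop) (by fun_prop)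
    | add y y' hy hy' => simp only [mul_add, map_add, hy, hy', Finset.sum_add_distrib]
    | tmul c d =>
      have hR : R (a * c) i j = ∑ l, R a i l * R c l j := by
        rw [map_mul, CStarMatrix.mul_apply]
      simp only [hX.mul_tmul, hX.slice_tmul, smul_mul_smul_comm, ← Finset.sum_smul]
      exact congrArg (· • (b * d)) hR

/-- The homomorphism `R ⊗ id` into matrices over `B` induced by a matrix representation `R` of
the first factor `A`. -/
def amplify : X →ₙₐ[ℂ] CStarMatrix n n B where
  toFun x := .ofMatrix fun i j ↦ slice ι (coefficient R i j) x
  map_smul' c x := CStarMatrix.ext fun i j ↦ map_smul (slice ι (coefficient R i j)) c x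
  map_zero' := CStarMatrix.ext fun i j ↦ map_zero (slice ι (coefficient R i j))
  map_add' x y := CStarMatrix.ext fun i j ↦ map_add (slice ι (coefficient R i j)) x y
  map_mul' x y := CStarMatrix.ext fun i j ↦ hX.slice_coefficient_mul R i j x y

lemma amplify_tmul (a : A) (b : B) (i j : n) :
    hX.amplify R (ι (a ⊗ₜ[ℂ] b)) i j = R a i j • b :=
  hX.slice_tmul _ a b

lemma continuous_amplify_apply (i j : n) : Continuous fun x ↦ hX.amplify R x i j :=
  (slice ι (coefficient R i j)).continuous

lemma amplify_star_apply (u : A ⊗[ℂ] B) :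
    hX.amplify R (star (ι u)) = star (hX.amplify R (ι u)) := by
  induction u using TensorProduct.induction_on with
  | zero => simp only [map_zero, star_zero]
  | add u v hu hv => simp only [map_add, star_add, hu, hv]
  | tmul a b =>
    ext i j
    rw [hX.star_tmul, CStarMatrix.star_apply, amplify_tmul, amplify_tmul, map_star,
      CStarMatrix.star_apply, star_smul]

section MatrixUnits

variable {R} [DecidableEq n] {e : n → n → A} (he : ∀ i j, R (e i j) = .ofMatrix (.single i j 1))
include he

lemma amplify_sum_tmul (m : CStarMatrix n n B) :
    hX.amplify R (ι (∑ i, ∑ j, e i j ⊗ₜ[ℂ] m i j)) = m := by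
  ext k l
  have hentry (i j : n) : coefficient R k l (e i j) = Matrix.single i j (1 : ℂ) k l :=
    congrFun₂ (he i j) k l
  change slice ι (coefficient R k l) _ = m k l
  simp only [map_sum, hX.slice_tmul, hentry, Matrix.single_apply, ite_and, ite_smul, one_smul,
    zero_smul, Finset.sum_ite_eq', Finset.sum_ite_irrel, Finset.sum_const_zero, Finset.mem_univ,
    if_true]

omit hX in
lemma map_sub_sum_smul_eq_zero (a : A) : R (a - ∑ i, ∑ j, R a i j • e i j) = 0 := by
  refine CStarMatrix.ext fun k l ↦ ?_
  have hentry (i j : n) : coefficient R k l (e i j) = Matrix.single i j (1 : ℂ) k l :=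
    congrFun₂ (he i j) k l
  change coefficient R k l _ = 0
  simp only [map_sub, map_sum, map_smul, hentry, Matrix.single_apply, ite_and, smul_eq_mul,
    mul_ite, mul_one, mul_zero, Finset.sum_ite_eq', Finset.sum_ite_irrel,
    Finset.sum_const_zero, Finset.mem_univ, if_true]
  exact sub_self _

variable {K : AddSubgroup X} (hK : IsClosed (K : Set X))
  (hker : ∀ p b, R p = 0 → ι (p ⊗ₜ[ℂ] b) ∈ K)
include hK hker

lemma sub_sum_tmul_amplify_mem (x : X) :
    x - ∑ i, ∑ j, ι (e i j ⊗ₜ[ℂ] hX.amplify R x i j) ∈ K := by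
  induction x using hX.induction_on with
  | isClosed =>
    refine hK.preimage (continuous_id.sub ?_)
    exact continuous_finsetSum _ fun i _ ↦ continuous_finsetSum _ fun j _ ↦
      (hX.continuous_tmul_right (e i j)).comp (hX.continuous_amplify_apply R i j)
  | add x y hx hy =>
    convert K.add_mem hx hy using 1
    simp only [map_add, CStarMatrix.add_apply, TensorProduct.tmul_add, Finset.sum_add_distrib]
    abel
  | tmul a b =>
    convert hker _ b (map_sub_sum_smul_eq_zero he a) using 1
    simp only [TensorProduct.sub_tmul, TensorProduct.sum_tmul, map_sub, map_sum, amplify_tmul,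
      TensorProduct.smul_tmul]

end MatrixUnits

variable {R} (hR : Function.Surjective R)
include hR

lemma exists_amplify_apply_eq (m : CStarMatrix n n B) :
    ∃ u : A ⊗[ℂ] B, hX.amplify R (ι u) = m := by
  classical
  choose e he using fun i j ↦ hR (.ofMatrix (.single i j 1))
  exact ⟨_, hX.amplify_sum_tmul he m⟩

theorem mem_of_amplify_eq_zero {K : AddSubgroup X} (hK : IsClosed (K : Set X))
    (hker : ∀ p b, R p = 0 → ι (p ⊗ₜ[ℂ] b) ∈ K) {x : X} (hx : hX.amplify R x = 0) : x ∈ K := by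
  classical
  choose e he using fun i j ↦ hR (.ofMatrix (.single i j 1))
  simpa [hx] using hX.sub_sum_tmul_amplify_mem he hK hker x

-- The kernel of the surjection `x ↦ star (R ⊗ id) (star x)` is closed, so it contains the kernel
-- of `R ⊗ id`; the involution of `X` itself need not be continuous.
theorem amplify_star [IsScalarTower ℂ X X] [SMulCommClass ℂ X X] (x : X) :
    hX.amplify R (star x) = star (hX.amplify R x) := by
  let _ : PartialOrder B := CStarAlgebra.spectralOrder B
  have _ : StarOrderedRing B := CStarAlgebra.spectralOrderedRing B
  let ψ : X →ₙ+* CStarMatrix n n B :=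
    { toFun x := star (hX.amplify R (star x))
      map_zero' := by simp only [star_zero, map_zero]
      map_add' x y := by simp only [star_add, map_add]
      map_mul' x y := by simp only [star_mul, map_mul] }
  have hψι (u : A ⊗[ℂ] B) : ψ (ι u) = hX.amplify R (ι u) :=
    (congrArg star (hX.amplify_star_apply R u)).trans (star_star _)
  have hψ : Function.Surjective ψ := fun m ↦
    let ⟨u, hu⟩ := hX.exists_amplify_apply_eq hR m
    ⟨ι u, (hψι u).trans hu⟩
  have hker {y : X} (hy : hX.amplify R y = 0) : ψ y = 0 := by
    refine hX.mem_of_amplify_eq_zero hR (K := ψ.toAddMonoidHom.ker)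
      (isClosed_setOf_map_eq_zero ψ hψ) (fun p b hp ↦ ?_) hy
    refine (hψι _).trans (CStarMatrix.ext fun i j ↦ ?_)
    rw [hX.amplify_tmul, hp]
    exact zero_smul ℂ b
  obtain ⟨u, hu⟩ := hX.exists_amplify_apply_eq hR (hX.amplify R x)
  have hxu : ψ (x - ι u) = 0 := hker (by rw [map_sub, hu, sub_self])
  rw [map_sub, sub_eq_zero, hψι, hu] at hxu
  exact (star_star _).symm.trans (congrArg star hxu)

end Amplification

end IsTensorCompletion

section PrimitiveIdeals

section SimpleModules

variable {S X : Type*} [CommRing S] [NonUnitalRing X] [Module S X]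

lemma inr_snd_inr_mul (x : X) (r : Unitization S X) :
    (((x : Unitization S X) * r).snd : Unitization S X) = x * r :=
  Unitization.ext (by simp) rfl

lemma inr_snd_mul_inr (r : Unitization S X) (x : X) :
    ((r * (x : Unitization S X)).snd : Unitization S X) = r * x :=
  Unitization.ext (by simp) rfl

variable [IsScalarTower S X X] [SMulCommClass S X X]

variable (S X) (N : Type*) [AddCommGroup N] [Module (Unitization S X) N]

/-- The annihilator of a module over a not necessarily unital algebra `X`. Such modules are
encoded as unital modules over the unitization of `X`. -/
def nonUnitalAnnihilator : Submodule S X where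
  carrier := {x | ∀ q : N, (x : Unitization S X) • q = 0}
  zero_mem' q := by rw [Unitization.inr_zero, zero_smul]
  add_mem' hx hy q := by rw [Unitization.inr_add, add_smul, hx, hy, add_zero]
  smul_mem' c x hx q := by rw [Unitization.inr_smul, Algebra.smul_def, mul_smul, hx, smul_zero]

theorem isPrimeIdeal_nonUnitalAnnihilator [IsSimpleModule (Unitization S X) N]
    (hN : ∃ x, x ∉ nonUnitalAnnihilator S X N) : IsPrimeIdeal (nonUnitalAnnihilator S X N) where
  mul_mem_left a x hx q := by rw [Unitization.inr_mul, mul_smul, hx, smul_zero]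
  mul_mem_right x hx a q := by rw [Unitization.inr_mul, mul_smul, hx]
  exists_notMem := hN
  mem_or_mem u v huv := by
    by_contra! ⟨hu, hv⟩
    have exists_smul_ne_zero {x : X} (hx : x ∉ nonUnitalAnnihilator S X N) {q : N} (hq : q ≠ 0) :
        ∃ y : Unitization S X, (x : Unitization S X) • y • q ≠ 0 := by
      obtain ⟨q', hq'⟩ := not_forall.1 hx
      obtain ⟨y, rfl⟩ := IsSimpleModule.toSpanSingleton_surjective (Unitization S X) hq q'
      exact ⟨y, hq'⟩
    obtain ⟨q, hq⟩ := not_forall.1 hv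
    obtain ⟨x, hx⟩ := hN
    obtain ⟨r, hr⟩ := exists_smul_ne_zero hx hq
    obtain ⟨s, hs⟩ := exists_smul_ne_zero hu hr
    refine hs ?_
    rw [← mul_smul (x : Unitization S X), ← inr_snd_inr_mul, ← mul_smul s, ← inr_snd_mul_inr,
      ← mul_smul, ← mul_smul, ← Unitization.inr_mul, ← Unitization.inr_mul]
    exact huv _ q

variable {S X} in
lemma mem_nonUnitalAnnihilator_quotient {M : Ideal (Unitization S X)} {x : X} :
    x ∈ nonUnitalAnnihilator S X (Unitization S X ⧸ M) ↔
      ∀ r : Unitization S X, (x : Unitization S X) * r ∈ M :=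
  (Submodule.Quotient.mk_surjective M).forall.trans <|
    forall_congr' fun _ ↦ Submodule.Quotient.mk_eq_zero M

end SimpleModules

section Banach

variable {𝕜 X : Type*} [NontriviallyNormedField 𝕜] [CompleteSpace 𝕜] [NonUnitalNormedRing X]
  [NormedSpace 𝕜 X] [IsScalarTower 𝕜 X X] [SMulCommClass 𝕜 X X] [CompleteSpace X]

lemma isClosed_nonUnitalAnnihilator_quotient (M : Ideal (Unitization 𝕜 X)) [M.IsMaximal] :
    IsClosed (nonUnitalAnnihilator 𝕜 X (Unitization 𝕜 X ⧸ M) : Set X) := by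
  let M' : Ideal (WithLp 1 (Unitization 𝕜 X)) := M.comap (WithLp.unitizationAlgEquiv 𝕜)
  have : M'.IsMaximal := Ideal.comap_isMaximal_of_equiv (WithLp.unitizationAlgEquiv 𝕜)
  have hset : (nonUnitalAnnihilator 𝕜 X (Unitization 𝕜 X ⧸ M) : Set X) =
      ⋂ r : WithLp 1 (Unitization 𝕜 X),
        (fun x : X ↦ WithLp.toLp 1 (x : Unitization 𝕜 X) * r) ⁻¹' M' := by
    ext x
    rw [SetLike.mem_coe, mem_nonUnitalAnnihilator_quotient, Set.mem_iInter]
    exact (WithLp.equiv 1 (Unitization 𝕜 X)).surjective.forall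
  rw [hset]
  refine isClosed_iInter fun r ↦ Ideal.IsMaximal.isClosed.preimage ?_
  exact WithLp.unitization_isometry_inr.continuous.mul continuous_const

variable (𝕜) in
-- Left quasi-regularity of `g` means that `1 + g` is left invertible in the unitization. Otherwise
-- `1 + g` lies in a maximal left ideal `M`, and `K` is the annihilator of the quotient by `M`: as
-- `(1 + w) * (1 + g) = 1 + (g + w + w * g)` kills the class of `1`, the last term cannot.
theorem exists_isPrimeIdeal_of_not_isLeftQuasiregular {g : X} (hg : ¬ IsLeftQuasiregular g) :
    ∃ K : Submodule 𝕜 X, IsClosed (K : Set X) ∧ IsPrimeIdeal K ∧ ∀ w, g + w + w * g ∉ K := by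
  have hspan : Ideal.span {1 + (g : Unitization 𝕜 X)} ≠ ⊤ := fun h ↦ by
    obtain ⟨r, hr⟩ := Ideal.mem_span_singleton'.1 ((Ideal.eq_top_iff_one _).1 h)
    have hfst : r.fst = 1 := by simpa using (Unitization.ext_iff.1 hr).1
    have hsnd : r.snd + (g + r.snd * g) = 0 := by
      simpa [mul_add, hfst] using (Unitization.ext_iff.1 hr).2
    exact hg ⟨r.snd, by rwa [add_left_comm, ← add_assoc] at hsnd⟩
  obtain ⟨M, hM, hgM⟩ := Ideal.exists_le_maximal _ hspan
  rw [Ideal.span_singleton_le_iff_mem] at hgM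
  have : IsSimpleModule (Unitization 𝕜 X) (Unitization 𝕜 X ⧸ M) :=
    isSimpleModule_iff_isCoatom.2 hM.out
  have hmem (w : X) : g + w + w * g ∉ nonUnitalAnnihilator 𝕜 X (Unitization 𝕜 X ⧸ M) := fun hw ↦ by
    have hwM : ((g + w + w * g : X) : Unitization 𝕜 X) ∈ M := by
      simpa only [mul_one] using mem_nonUnitalAnnihilator_quotient.1 hw 1
    refine hM.ne_top ((Ideal.eq_top_iff_one M).2 ?_)
    convert M.sub_mem (M.mul_mem_left (1 + (w : Unitization 𝕜 X)) hgM) hwM using 1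
    simp only [Unitization.inr_add, Unitization.inr_mul]
    noncomm_ring
  exact ⟨_, isClosed_nonUnitalAnnihilator_quotient M,
    isPrimeIdeal_nonUnitalAnnihilator 𝕜 X _ ⟨_, hmem 0⟩, hmem⟩

end Banach

end PrimitiveIdeals

section PrimeIdealsOfTensorCompletions

namespace IsTensorCompletion

section LeftFactor

variable {A B X : Type u} [NonUnitalNormedRing A] [StarRing A] [NormedSpace ℂ A]
  [NonUnitalNormedRing B] [StarRing B] [NormedSpace ℂ B]
  [NonUnitalNormedRing X] [StarRing X] [NormedSpace ℂ X] [CompleteSpace X]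
  {ι : A ⊗[ℂ] B →ₗ[ℂ] X}

/-- The elements `a` of the first factor with `a ⊗ B ⊆ K`. -/
def leftFactor (ι : A ⊗[ℂ] B →ₗ[ℂ] X) (K : Submodule ℂ X) : Submodule ℂ A where
  carrier := {a | ∀ b, ι (a ⊗ₜ[ℂ] b) ∈ K}
  zero_mem' b := by rw [TensorProduct.zero_tmul, map_zero]; exact K.zero_mem
  add_mem' ha hc b := by rw [TensorProduct.add_tmul, map_add]; exact K.add_mem (ha b) (hc b)
  smul_mem' c a ha b := by rw [← TensorProduct.smul_tmul', map_smul]; exact K.smul_mem c (ha b)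

variable {K : Submodule ℂ X}

lemma isClosed_leftFactor (hX : IsTensorCompletion bsProjNorm X ι) (hcl : IsClosed (K : Set X)) :
    IsClosed (leftFactor ι K : Set A) := by
  have hset : (leftFactor ι K : Set A) = ⋂ b, (fun a ↦ ι (a ⊗ₜ[ℂ] b)) ⁻¹' K :=
    (Set.ofPred_forall fun b a ↦ ι (a ⊗ₜ[ℂ] b) ∈ K)
  rw [hset]
  exact isClosed_iInter fun b ↦ hcl.preimage (hX.continuous_tmul_left b)

lemma isPrimeIdeal_leftFactor {ν : A ⊗[ℂ] B → ℝ} (hX : IsTensorCompletion ν X ι)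
    (hcl : IsClosed (K : Set X)) (hK : IsPrimeIdeal K) : IsPrimeIdeal (leftFactor ι K) where
  mul_mem_left a p hp b := hK.mem_of_forall_mul_mem fun x ↦ by
    induction x using hX.induction_on with
    | isClosed => exact hcl.preimage (continuous_id.mul continuous_const)
    | add x y hx hy => exact add_mul x y _ ▸ K.add_mem hx hy
    | tmul c d =>
      rw [hX.mul_tmul, ← mul_assoc, ← hX.mul_tmul]
      exact hK.mul_mem_left _ _ (hp b)
  mul_mem_right p hp a b := hK.mem_of_forall_mem_mul fun x ↦ by
    induction x using hX.induction_on with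
    | isClosed => exact hcl.preimage (continuous_const.mul continuous_id)
    | add x y hx hy => exact mul_add _ x y ▸ K.add_mem hx hy
    | tmul c d =>
      rw [hX.mul_tmul, mul_assoc, ← hX.mul_tmul]
      exact hK.mul_mem_right _ (hp b) _
  exists_notMem := by
    by_contra! h
    obtain ⟨x, hx⟩ := hK.exists_notMem
    refine hx ?_
    clear hx
    induction x using hX.induction_on with
    | isClosed => exact hcl
    | add x y hx hy => exact K.add_mem hx hy
    | tmul a b => exact h a b
  mem_or_mem a c hac := or_iff_not_imp_left.2 fun ha d ↦ by
    obtain ⟨b, hb⟩ := not_forall.1 ha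
    refine (hK.mem_or_mem (ι (a ⊗ₜ[ℂ] b)) _ fun x ↦ ?_).resolve_left hb
    induction x using hX.induction_on with
    | isClosed => exact hcl.preimage (f := fun x ↦ ι (a ⊗ₜ[ℂ] b) * x * ι (c ⊗ₜ[ℂ] d)) (by fun_prop)
    | add x y hx hy =>
      rw [mul_add, add_mul]
      exact K.add_mem hx hy
    | tmul y z =>
      rw [hX.mul_tmul, hX.mul_tmul]
      exact hac y _

end LeftFactor

theorem isLeftQuasiregular_of_amplify {A B X : Type u} [NonUnitalCStarAlgebra A]
    [NonUnitalCStarAlgebra B] [NonUnitalNormedRing X] [StarRing X] [NormedSpace ℂ X]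
    [CompleteSpace X] [IsScalarTower ℂ X X] [SMulCommClass ℂ X X] {ι : A ⊗[ℂ] B →ₗ[ℂ] X}
    (hX : IsTensorCompletion bsProjNorm X ι) (hA : IsSubhomogeneous A) {g : X}
    (hg : ∀ (k : ℕ) (R : A →⋆ₙₐ[ℂ] CStarMatrix (Fin k) (Fin k) ℂ),
      Function.Surjective R → IsLeftQuasiregular (hX.amplify R g)) : IsLeftQuasiregular g := by
  by_contra hgX
  obtain ⟨K, hcl, hK, hgK⟩ := exists_isPrimeIdeal_of_not_isLeftQuasiregular ℂ hgX
  obtain ⟨ρ, hρ⟩ := (hX.isPrimeIdeal_leftFactor hcl hK).exists_irreducibleRepOn_ker_eq hA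
    (hX.isClosed_leftFactor hcl)
  obtain ⟨_, hN⟩ := hA
  have := (hN ρ).1
  obtain ⟨k, R, hR, hker⟩ := ρ.exists_surjective_cstarMatrix
  obtain ⟨m, hm⟩ := hg k R hR
  obtain ⟨u, rfl⟩ := hX.exists_amplify_apply_eq hR m
  refine hgK (ι u) (hX.mem_of_amplify_eq_zero hR (K := K.toAddSubgroup) hcl (fun p b hp ↦ ?_) ?_)
  · exact (hρ ▸ (hker p).1 hp : p ∈ leftFactor ι K) b
  · rw [map_add, map_add, map_mul, hm]

end IsTensorCompletion

end PrimeIdealsOfTensorCompletions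

/-- If `A` is a subhomogeneous C⋆-algebra and `B` any C⋆-algebra, then the
Banach space projective tensor product `A ⊗_γ B`, with its canonical Banach `*`-algebra
structure (realized as the tensor completion `X` for the norm `γ`), is symmetric: every
element of the form `x* x` has nonnegative (quasi)spectrum. -/
theorem bsProjTensor_symmetric_of_subhomogeneous {A B X : Type u}
    [NonUnitalCStarAlgebra A] [NonUnitalCStarAlgebra B]
    [NonUnitalNormedRing X] [StarRing X] [NormedSpace ℂ X] [CompleteSpace X]
    [IsScalarTower ℂ X X] [SMulCommClass ℂ X X]
    (ι : A ⊗[ℂ] B →ₗ[ℂ] X) (hX : IsTensorCompletion bsProjNorm X ι)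
    (hA : IsSubhomogeneous A) :
    ∀ x : X, quasispectrum ℂ (star x * x) ⊆ {z : ℂ | z.im = 0 ∧ 0 ≤ z.re} := by
  intro x c hc
  by_contra hneg
  let _ : PartialOrder B := CStarAlgebra.spectralOrder B
  have _ : StarOrderedRing B := CStarAlgebra.spectralOrderedRing B
  have hc₀ : c ≠ 0 := fun h ↦ hneg (by simp [h])
  let g : X := -(c⁻¹ • (star x * x))
  have hquasi {k : ℕ} {R : A →⋆ₙₐ[ℂ] CStarMatrix (Fin k) (Fin k) ℂ} (hR : Function.Surjective R) :
      IsQuasiregular (hX.amplify R g) := by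
    rw [map_neg, map_smul, map_mul, hX.amplify_star hR]
    exact not_not.1 fun h ↦ hneg (quasispectrum_star_mul_self_subset _
      ((mem_quasispectrum_iff_of_ne_zero hc₀).2 h))
  have hg : IsLeftQuasiregular g := hX.isLeftQuasiregular_of_amplify hA fun _ _ hR ↦
    isLeftQuasiregular_of_isQuasiregular (hquasi hR)
  have hg' : IsLeftQuasiregular (star g) := hX.isLeftQuasiregular_of_amplify hA fun _ _ hR ↦
    isLeftQuasiregular_of_isQuasiregular (hX.amplify_star hR g ▸ isQuasiregular_star (hquasi hR))
  exact (mem_quasispectrum_iff_of_ne_zero hc₀).1 hc (hg.isQuasiregular hg')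

end
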